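/- Uniform H¹ bound for solutions of the regularized Chern–Simons–Schrödinger equation: let β ∈ ℝ, R > 0, and let u : ℝ × ℝ² → ℂ be a smooth Schwartz-class solution of the Chern–Simons–Schrödinger equation i ∂ₜ u = −Δu − 2iβ A·∇u + β²‖A‖²u − β(K_R ∗ (2βA|u|² + J[u]))u with A(t,·) = K_R ∗ |u(t,·)|², which additionally conserves mass, i.e. ‖u(t,·)‖₂ = ‖u(0,·)‖₂ for all t. Then there exists a constant C depending only on β and ‖u(0,·)‖_{H¹} (in particular independent of R and of t) such that ‖u(t,·)‖_{H¹} ≤ C for all t. -/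

import Mathlib

noncomputable section
open MeasureTheory ENNReal
open scoped RealInnerProductSpace

/-- The plane `ℝ²`. -/
abbrev E2 : Type := EuclideanSpace ℝ (Fin 2)

/-- The rotation by 90 degrees: `x^⊥ = (-x₂, x₁)`. -/
def perp (x : E2) : E2 := (WithLp.equiv 2 (Fin 2 → ℝ)).symm ![-(x 1), x 0]

/-- The Aharonov–Bohm kernel `K_R(x) = x^⊥ / (max R ‖x‖)²` (with `K_R 0 = 0`,
also when `R = 0`, by the junk-value convention `(0 : ℝ)⁻¹ = 0`). -/
def K (R : ℝ) (x : E2) : E2 := ((max R ‖x‖) ^ 2)⁻¹ • perp x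

/-- The standard basis of `ℝ²`. -/
def e2 (j : Fin 2) : E2 := EuclideanSpace.single j 1

/-- Componentwise convolution of the vector kernel `K_R` with a scalar density. -/
def convKs (R : ℝ) (ρ : E2 → ℝ) (x : E2) : E2 := ∫ y, ρ y • K R (x - y)

/-- Convolution of the vector kernel `K_R` with a vector field, summed over components. -/
def convKv (R : ℝ) (F : E2 → E2) (x : E2) : ℝ := ∫ y, ⟪K R (x - y), F y⟫

/-- The current `J[u] = i(u∇ū - ū∇u) = 2 Im(ū ∇u)`, an `ℝ²`-valued function. -/
def Jf (u : E2 → ℂ) (x : E2) : E2 :=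
  (WithLp.equiv 2 (Fin 2 → ℝ)).symm fun j =>
    2 * ((starRingEnd ℂ) (u x) * fderiv ℝ u x (e2 j)).im

/-- The `H¹` norm `(‖u‖₂² + ‖∇u‖₂²)^{1/2}` (extended-real valued). -/
def H1 (u : E2 → ℂ) : ℝ≥0∞ :=
  (eLpNorm u 2 volume ^ 2 + eLpNorm (fun x => fderiv ℝ u x) 2 volume ^ 2) ^ (1 / 2 : ℝ)

/-- The `H²` norm `(‖u‖₂² + ‖∇u‖₂² + ‖∇²u‖₂²)^{1/2}` (extended-real valued). -/
def H2 (u : E2 → ℂ) : ℝ≥0∞ :=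
  (eLpNorm u 2 volume ^ 2 + eLpNorm (fun x => fderiv ℝ u x) 2 volume ^ 2
    + eLpNorm (fun x => fderiv ℝ (fderiv ℝ u) x) 2 volume ^ 2) ^ (1 / 2 : ℝ)

/-- The magnetic potential `A^R[|u|²] = K_R ∗ |u|²`. -/
def Apot (R : ℝ) (u : E2 → ℂ) (x : E2) : E2 := convKs R (fun y => ‖u y‖ ^ 2) x

/-- Laplacian of a complex function on `ℝ²`. -/
def lap (u : E2 → ℂ) (x : E2) : ℂ :=
  ∑ j : Fin 2, fderiv ℝ (fun y => fderiv ℝ u y (e2 j)) x (e2 j)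

/-- Right-hand side of the regularized Chern–Simons–Schrödinger equation
`i∂ₜu = -Δu - 2iβ A·∇u + β²‖A‖²u - β(K_R ∗ (2βA|u|² + J[u]))u`,
where `A = A^R[|u|²]`. -/
def cssRHS (β R : ℝ) (u : E2 → ℂ) (x : E2) : ℂ :=
  -(lap u x) - 2 * β * Complex.I * fderiv ℝ u x (Apot R u x)
    + (↑(β ^ 2 * ‖Apot R u x‖ ^ 2) : ℂ) * u x
    - (β : ℂ) * (↑(convKv R (fun y => (2 * β * ‖u y‖ ^ 2) • Apot R u y + Jf u y) x) : ℂ) * u x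

/-- The (average-field / magnetic) energy `∫ ‖(-i∇ + β A^R[|u|²]) u‖²`. -/
def energy (β R : ℝ) (u : E2 → ℂ) : ℝ :=
  ∫ x, ∑ j : Fin 2,
    ‖-Complex.I * fderiv ℝ u x (e2 j) + (↑(β * Apot R u x j) : ℂ) * u x‖ ^ 2

section Proofs
open Set Filter Topology

/-! ### Abstract real-variable lemmas -/

theorem bdd_compact_of_locBdd {g : ℝ → ℝ} {s : Set ℝ} (hs : IsCompact s)
    (h : ∀ t ∈ s, ∃ G, ∀ᶠ x in 𝓝 t, g x ≤ G) : ∃ G, ∀ t ∈ s, g t ≤ G := by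
  refine hs.induction_on (p := fun s => ∃ G, ∀ t ∈ s, g t ≤ G) ⟨0, by simp⟩ ?_ ?_ ?_
  · rintro s t hst ⟨G, hG⟩; exact ⟨G, fun x hx => hG x (hst hx)⟩
  · rintro s t ⟨G, hG⟩ ⟨G', hG'⟩
    refine ⟨max G G', fun x hx => ?_⟩
    rcases hx with hx | hx
    · exact (hG x hx).trans (le_max_left _ _)
    · exact (hG' x hx).trans (le_max_right _ _)
  · intro x hx
    obtain ⟨G, hG⟩ := h x hx
    exact ⟨_, mem_nhdsWithin_of_mem_nhds hG, G, fun y hy => hy⟩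

/-- one-sided step of the Baire argument -/
theorem baire_step {g E : ℝ → ℝ} {c : ℝ}
    (hconst : ∀ a b G, a ≤ b → (∀ t ∈ Icc a b, g t ≤ G) → E a = E b)
    (h1 : ∀ t, g t ≤ c * E t) (h2 : ∀ t, E t ≤ c * g t) (hc : 0 ≤ c)
    {F : Set ℝ} (hF : IsClosed F) (hFO : ∀ t ∉ F, ∃ G, ∀ᶠ x in 𝓝 t, g x ≤ G)
    {t t0 : ℝ} (ht : t ≤ t0) (ht0 : t0 ∈ F) {n : ℝ} (hn : ∀ s ∈ F, s ∈ Icc t t0 → g s ≤ n) :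
    g t ≤ c * (c * n) := by
  set a := sInf (F ∩ Icc t t0) with ha
  have hne : (F ∩ Icc t t0).Nonempty := ⟨t0, ht0, ht, le_rfl⟩
  have hbd : BddBelow (F ∩ Icc t t0) := ⟨t, fun x hx => hx.2.1⟩
  have hmem : a ∈ F ∩ Icc t t0 := (hF.inter isClosed_Icc).csInf_mem hne hbd
  have hnot : ∀ s, t ≤ s → s < a → s ∉ F := fun s hs hsa hsF => by
    have := csInf_le hbd (show s ∈ F ∩ Icc t t0 from ⟨hsF, hs, (hsa.trans_le hmem.2.2).le⟩)
    exact absurd hsa (not_lt.2 this)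
  have key : ∀ s, t ≤ s → s < a → E t = E s := fun s hs hsa => by
    obtain ⟨G, hG⟩ := bdd_compact_of_locBdd (g := g) (isCompact_Icc (a := t) (b := s))
      (fun x hx => hFO x (hnot x hx.1 (hx.2.trans_lt hsa)))
    exact hconst t s G hs hG
  have hE : E t = E a := by
    refine hconst t a (max (c * E t) n) hmem.2.1 fun s hs => ?_
    rcases hs.2.lt_or_eq with h | h
    · rw [key s hs.1 h]; exact (h1 s).trans (le_max_left _ _)
    · rw [h]; exact (hn a hmem.1 hmem.2).trans (le_max_right _ _)
  calc g t ≤ c * E t := h1 t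
    _ = c * E a := by rw [hE]
    _ ≤ c * (c * n) := by
        refine mul_le_mul_of_nonneg_left ((h2 a).trans ?_) hc
        exact mul_le_mul_of_nonneg_left (hn a hmem.1 hmem.2) hc

theorem baire_const {g E : ℝ → ℝ} {c : ℝ} (hlsc : ∀ n : ℕ, IsClosed {t | g t ≤ n})
    (hconst : ∀ a b G, a ≤ b → (∀ t ∈ Icc a b, g t ≤ G) → E a = E b)
    (h1 : ∀ t, g t ≤ c * E t) (h2 : ∀ t, E t ≤ c * g t) (hc : 0 ≤ c) (t : ℝ) : E t = E 0 := by
  set O : Set ℝ := {t | ∃ G, ∀ᶠ x in 𝓝 t, g x ≤ G} with hO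
  have hOo : IsOpen O := by
    rw [isOpen_iff_mem_nhds]
    rintro x ⟨G, hG⟩
    filter_upwards [eventually_eventually_nhds.2 hG] with y hy using ⟨G, hy⟩
  have hFc : IsClosed Oᶜ := hOo.isClosed_compl
  have hFO : ∀ t ∉ Oᶜ, ∃ G, ∀ᶠ x in 𝓝 t, g x ≤ G := fun t ht => by
    simpa [hO] using ht
  by_cases hemp : (Oᶜ).Nonempty
  · exfalso
    haveI : Nonempty (Oᶜ : Set ℝ) := hemp.to_subtype
    haveI : CompleteSpace (Oᶜ : Set ℝ) := hFc.completeSpace_coe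
    obtain ⟨n, ⟨x, hx⟩⟩ := nonempty_interior_of_iUnion_of_closed
      (X := (Oᶜ : Set ℝ)) (f := fun n : ℕ => {t : (Oᶜ : Set ℝ) | g t ≤ n})
      (fun n => (hlsc n).preimage continuous_subtype_val)
      (by
        ext x
        simp only [mem_iUnion, mem_setOf_eq, mem_univ, iff_true]
        exact exists_nat_ge _)
    rw [mem_interior_iff_mem_nhds, nhds_subtype, mem_comap] at hx
    obtain ⟨U, hU, hUs⟩ := hx
    obtain ⟨ε, hε, hball⟩ := Metric.mem_nhds_iff.1 hU
    apply x.2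
    refine ⟨max n (c * (c * n)), ?_⟩
    have hn : ∀ s ∈ Oᶜ, |s - x| < ε → g s ≤ n := fun s hs hsε =>
      hUs (show (⟨s, hs⟩ : (Oᶜ : Set ℝ)) ∈ Subtype.val ⁻¹' U from hball (by
        simpa [Real.dist_eq] using hsε))
    filter_upwards [Metric.ball_mem_nhds (x : ℝ) hε] with t ht
    rw [Metric.mem_ball, Real.dist_eq] at ht
    refine le_trans ?_ (le_max_right _ _)
    rcases le_total t x with h | h
    · refine baire_step hconst h1 h2 hc hFc hFO h x.2 fun s hs hst => hn s hs ?_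
      rw [abs_lt] at ht ⊢
      constructor <;> linarith [hst.1, hst.2]
    · have := baire_step (g := fun s => g (-s)) (E := fun s => E (-s)) (c := c) (F := {s | -s ∈ Oᶜ})
        (t := -t) (t0 := -x) (n := n)
        (fun a b G hab hG => (hconst (-b) (-a) G (by linarith) fun s hs => by
          simpa using hG (-s) ⟨by linarith [hs.2], by linarith [hs.1]⟩).symm)
        (fun t => h1 _) (fun t => h2 _) hc (hFc.preimage continuous_neg)
        (fun s hs => by
          obtain ⟨G, hG⟩ := hFO (-s) hs
          exact ⟨G, (continuous_neg.tendsto s).eventually hG⟩) (by linarith) (by simp [-mem_compl_iff])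
        (fun s hs hst => hn (-s) hs (by
          rw [abs_lt] at ht ⊢
          constructor <;> linarith [hst.1, hst.2]))
      simpa using this
  · have hall : ∀ t, ∃ G, ∀ᶠ x in 𝓝 t, g x ≤ G := fun t => hFO t fun h => hemp ⟨t, h⟩
    have : ∀ a b, a ≤ b → E a = E b := fun a b hab => by
      obtain ⟨G, hG⟩ := bdd_compact_of_locBdd (g := g) (isCompact_Icc (a := a) (b := b))
        (fun x hx => hall x)
      exact hconst a b G hab hG
    rcases le_total t 0 with h | h
    · exact this _ _ h
    · exact (this _ _ h).symm

/-- extending from short intervals to all intervals -/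
theorem const_of_short {g E : ℝ → ℝ} {G δ : ℝ} (hδ : 0 < δ)
    (h : ∀ a b, a ≤ b → b - a ≤ δ → (∀ t ∈ Icc a b, g t ≤ G) → E a = E b) :
    ∀ a b, a ≤ b → (∀ t ∈ Icc a b, g t ≤ G) → E a = E b := by
  have : ∀ k : ℕ, ∀ a b, a ≤ b → b - a ≤ k * δ → (∀ t ∈ Icc a b, g t ≤ G) → E a = E b := by
    intro k
    induction k with
    | zero => intro a b hab h0 _; simp at h0; rw [le_antisymm hab h0]
    | succ k ih =>
      intro a b hab hk hG
      rcases le_total (b - a) δ with h' | h'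
      · exact h a b hab h' hG
      · rw [h a (a + δ) (by linarith) (by linarith) (fun t ht => hG t ⟨ht.1, by linarith [ht.2]⟩)]
        push_cast at hk
        exact ih (a + δ) b (by linarith) (by linarith) (fun t ht => hG t ⟨by linarith [ht.1], ht.2⟩)
  intro a b hab hG
  obtain ⟨k, hk⟩ := exists_nat_ge ((b - a) / δ)
  exact this k a b hab ((div_le_iff₀ hδ).1 hk) hG

theorem mono_of_lower {E : ℝ → ℝ} {a b : ℝ} (hab : a ≤ b) (hc : ContinuousOn E (Icc a b))
    (h : ∀ x ∈ Icc a b, ∀ ε > 0, ∀ᶠ t in 𝓝[Icc a b] x, -(ε * |t - x|) ≤ E t - E x) :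
    E a ≤ E b := by
  have := image_le_of_liminf_slope_right_le_deriv_boundary (f := fun x => - E x) (a := a) (b := b)
    hc.neg (B := fun _ => - E a) (B' := fun _ => 0) le_rfl continuousOn_const
    (fun x _ => hasDerivWithinAt_const ..) (fun x hx r hr => by
      apply Eventually.frequently
      have h1 := h x ⟨hx.1, hx.2.le⟩ (r / 2) (by linarith)
      have hle : 𝓝[>] x ≤ 𝓝[Icc a b] x := by
        rw [← nhdsWithin_Ioc_eq_nhdsGT hx.2]
        exact nhdsWithin_mono _ fun y hy => ⟨hx.1.trans hy.1.le, hy.2⟩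
      filter_upwards [hle h1, self_mem_nhdsWithin] with t ht htx
      have hpos : 0 < t - x := sub_pos.2 htx
      rw [slope_def_field, div_lt_iff₀ hpos]
      rw [abs_of_pos hpos] at ht
      have : 0 < r * (t - x) := mul_pos hr hpos
      linarith)
  have h2 := this (right_mem_Icc.2 hab)
  simpa using h2

theorem const_of_lower {E : ℝ → ℝ} {a b : ℝ} (hab : a ≤ b) (hc : ContinuousOn E (Icc a b))
    (h : ∀ x ∈ Icc a b, ∀ ε > 0, ∀ᶠ t in 𝓝[Icc a b] x, -(ε * |t - x|) ≤ E t - E x) :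
    E a = E b := by
  refine le_antisymm (mono_of_lower hab hc h) ?_
  have hmap : MapsTo (fun x : ℝ => -x) (Icc (-b) (-a)) (Icc a b) := fun x hx =>
    ⟨by linarith [hx.2], by linarith [hx.1]⟩
  have := mono_of_lower (E := fun x => E (-x)) (a := -b) (b := -a) (by linarith)
    (hc.comp continuous_neg.continuousOn hmap) (fun x hx ε hε => by
      have h1 := h (-x) (hmap hx) ε hε
      have ht : Tendsto (fun x : ℝ => -x) (𝓝[Icc (-b) (-a)] x) (𝓝[Icc a b] (-x)) :=
        tendsto_nhdsWithin_iff.2 ⟨(continuous_neg.tendsto x).mono_left nhdsWithin_le_nhds,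
          eventually_mem_nhdsWithin.mono fun y hy => hmap hy⟩
      filter_upwards [ht.eventually h1] with t ht
      have : |-t - -x| = |t - x| := by rw [← abs_neg]; congr 1; ring
      rwa [this] at ht)
  simpa using this


/-! ### Function classes -/

section classes
variable {F G : Type*} [NormedAddCommGroup F] [NormedAddCommGroup G]

/-- continuous and bounded -/
def Bc (f : E2 → F) : Prop := Continuous f ∧ ∃ C, ∀ x, ‖f x‖ ≤ C

/-- continuous, bounded and integrable -/
def Nc (f : E2 → F) : Prop := Continuous f ∧ Integrable f ∧ ∃ C, ∀ x, ‖f x‖ ≤ C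

/-- The `L²` norm as a real number. -/
def n2 (f : E2 → F) : ℝ := √(∫ x, ‖f x‖ ^ 2)

theorem Nc.bc {f : E2 → F} (h : Nc f) : Bc f := ⟨h.1, h.2.2⟩
theorem Nc.int {f : E2 → F} (h : Nc f) : Integrable f := h.2.1
theorem Nc.cont {f : E2 → F} (h : Nc f) : Continuous f := h.1
theorem Bc.cont {f : E2 → F} (h : Bc f) : Continuous f := h.1

theorem Nc.mono {f : E2 → F} {g : E2 → G} {C : ℝ} (hg : Nc g) (hf : Continuous f)
    (h : ∀ x, ‖f x‖ ≤ C * ‖g x‖) : Nc f := by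
  refine ⟨hf, ?_, ?_⟩
  · exact (hg.int.norm.const_mul C).mono' hf.aestronglyMeasurable (ae_of_all _ h)
  · obtain ⟨D, hD⟩ := hg.2.2
    refine ⟨|C| * D, fun x => (h x).trans ?_⟩
    calc C * ‖g x‖ ≤ |C| * ‖g x‖ := by gcongr; exact le_abs_self C
      _ ≤ |C| * D := by gcongr; exact hD x

theorem Nc.norm {f : E2 → F} (h : Nc f) : Nc (fun x => ‖f x‖) :=
  h.mono (C := 1) h.1.norm (fun x => by simp)
theorem Nc.add {f g : E2 → F} (hf : Nc f) (hg : Nc g) : Nc (fun x => f x + g x) := by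
  refine ⟨hf.1.add hg.1, hf.int.add hg.int, ?_⟩
  obtain ⟨C, hC⟩ := hf.2.2
  obtain ⟨D, hD⟩ := hg.2.2
  exact ⟨C + D, fun x => (norm_add_le _ _).trans (add_le_add (hC x) (hD x))⟩
theorem Nc.neg {f : E2 → F} (hf : Nc f) : Nc (fun x => - f x) :=
  hf.mono (C := 1) hf.1.neg (fun x => by simp)
theorem Nc.sub {f g : E2 → F} (hf : Nc f) (hg : Nc g) : Nc (fun x => f x - g x) := by
  simpa [sub_eq_add_neg] using hf.add hg.neg
theorem Bc.add {f g : E2 → F} (hf : Bc f) (hg : Bc g) : Bc (fun x => f x + g x) := by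
  refine ⟨hf.1.add hg.1, ?_⟩
  obtain ⟨C, hC⟩ := hf.2
  obtain ⟨D, hD⟩ := hg.2
  exact ⟨C + D, fun x => (norm_add_le _ _).trans (add_le_add (hC x) (hD x))⟩

theorem Nc.sum {ι : Type*} {s : Finset ι} {f : ι → E2 → F} (h : ∀ i ∈ s, Nc (f i)) :
    Nc (fun x => ∑ i ∈ s, f i x) := by
  classical
  induction s using Finset.induction_on with
  | empty =>
    simp only [Finset.sum_empty]
    exact ⟨continuous_const, integrable_zero _ _ _, 0, by simp⟩
  | insert a s ha ih =>
    simp only [Finset.sum_insert ha]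
    exact (h a (by simp)).add (ih fun i hi => h i (by simp [hi]))

theorem Bc.mulNc {R : Type*} [NormedRing R] {f g : E2 → R} (hf : Bc f) (hg : Nc g) :
    Nc (fun x => f x * g x) := by
  obtain ⟨C, hC⟩ := hf.2
  exact hg.mono (C := C) (hf.1.mul hg.1) fun x => (norm_mul_le _ _).trans (by gcongr; exact hC x)
theorem Nc.mulBc {R : Type*} [NormedRing R] {f g : E2 → R} (hg : Nc g) (hf : Bc f) :
    Nc (fun x => g x * f x) := by
  obtain ⟨C, hC⟩ := hf.2
  exact hg.mono (C := C) (hg.1.mul hf.1) fun x => (norm_mul_le _ _).trans (by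
    rw [mul_comm]; gcongr; exact hC x)
theorem Nc.mul {R : Type*} [NormedRing R] {f g : E2 → R} (hf : Nc f) (hg : Nc g) :
    Nc (fun x => f x * g x) := hf.bc.mulNc hg
theorem Bc.mul {R : Type*} [NormedRing R] {f g : E2 → R} (hf : Bc f) (hg : Bc g) :
    Bc (fun x => f x * g x) := by
  obtain ⟨C, hC⟩ := hf.2
  obtain ⟨D, hD⟩ := hg.2
  refine ⟨hf.1.mul hg.1, C * D, fun x => (norm_mul_le _ _).trans ?_⟩
  exact mul_le_mul (hC x) (hD x) (norm_nonneg _) ((norm_nonneg _).trans (hC x))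
theorem Bc.const (c : F) : Bc (fun _ => c) := ⟨continuous_const, ‖c‖, fun _ => le_rfl⟩
theorem Nc.cmul {R : Type*} [NormedRing R] {g : E2 → R} (hg : Nc g) (c : R) :
    Nc (fun x => c * g x) := (Bc.const c).mulNc hg
theorem Bc.ofReal {f : E2 → ℝ} (hf : Bc f) : Bc (fun x => (f x : ℂ)) := by
  obtain ⟨C, hC⟩ := hf.2
  exact ⟨Complex.continuous_ofReal.comp hf.1, C, fun x => by simpa using hC x⟩
theorem Nc.re {f : E2 → ℂ} (h : Nc f) : Nc (fun x => (f x).re) :=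
  h.mono (C := 1) (Complex.continuous_re.comp h.1) fun x => by
    simpa using Complex.abs_re_le_norm (f x)
theorem Nc.im {f : E2 → ℂ} (h : Nc f) : Nc (fun x => (f x).im) :=
  h.mono (C := 1) (Complex.continuous_im.comp h.1) fun x => by
    simpa using Complex.abs_im_le_norm (f x)
theorem Nc.conj {f : E2 → ℂ} (h : Nc f) : Nc (fun x => (starRingEnd ℂ) (f x)) :=
  h.mono (C := 1) (Complex.continuous_conj.comp h.1) fun x => by simp

theorem Nc.sq {f : E2 → F} (h : Nc f) : Nc (fun x => ‖f x‖ ^ 2) := by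
  simpa [pow_two] using h.norm.mul h.norm
theorem Nc.nn {f : E2 → F} {g : E2 → G} (h : Nc f) (hg : Nc g) : Nc (fun x => ‖f x‖ * ‖g x‖) :=
  h.norm.mul hg.norm

theorem n2_nonneg (f : E2 → F) : 0 ≤ n2 f := Real.sqrt_nonneg _
theorem n2_sq (f : E2 → F) : n2 f ^ 2 = ∫ x, ‖f x‖ ^ 2 :=
  Real.sq_sqrt (integral_nonneg fun x => by positivity)

theorem cs {f : E2 → F} {g : E2 → G} (hf : Nc f) (hg : Nc g) :
    ∫ x, ‖f x‖ * ‖g x‖ ≤ n2 f * n2 g := by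
  have hh := integral_mul_le_Lp_mul_Lq_of_nonneg (μ := (volume : Measure E2))
    (f := fun x => ‖f x‖) (g := fun x => ‖g x‖)
    Real.HolderConjugate.two_two (ae_of_all _ fun x => norm_nonneg _)
    (ae_of_all _ fun x => norm_nonneg _)
    (by
      have := (memLp_two_iff_integrable_sq (μ := (volume : Measure E2)) hf.norm.1.aestronglyMeasurable).2 hf.sq.int
      simpa using this)
    (by
      have := (memLp_two_iff_integrable_sq (μ := (volume : Measure E2)) hg.norm.1.aestronglyMeasurable).2 hg.sq.int
      simpa using this)
  simpa [n2, Real.sqrt_eq_rpow] using hh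

theorem n2_le {f : E2 → F} {g : E2 → G} {C : ℝ} (hC : 0 ≤ C) (hg : Nc g) (h : ∀ x, ‖f x‖ ≤ C * ‖g x‖) :
    n2 f ≤ C * n2 g := by
  refine Real.sqrt_le_iff.2 ⟨mul_nonneg hC (n2_nonneg _), ?_⟩
  rw [mul_pow, n2_sq, ← integral_const_mul]
  refine integral_mono_of_nonneg (ae_of_all _ fun x => by positivity) (hg.sq.int.const_mul _)
    (ae_of_all _ fun x => ?_)
  simp only
  rw [← mul_pow]
  exact pow_le_pow_left₀ (norm_nonneg _) (h x) 2

theorem n2_add {f g : E2 → F} (hf : Nc f) (hg : Nc g) : n2 (fun x => f x + g x) ≤ n2 f + n2 g := by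
  refine Real.sqrt_le_iff.2 ⟨add_nonneg (n2_nonneg _) (n2_nonneg _), ?_⟩
  have h1 := cs hf hg
  have h2 : ∫ x, ‖f x + g x‖ ^ 2 ≤ ∫ x, (‖f x‖ ^ 2 + (2 * (‖f x‖ * ‖g x‖) + ‖g x‖ ^ 2)) := by
    refine integral_mono (hf.add hg).sq.int
      (hf.sq.int.add (((hf.nn hg).int.const_mul 2).add hg.sq.int)) fun x => ?_
    have := pow_le_pow_left₀ (norm_nonneg _) (norm_add_le (f x) (g x)) 2
    simp only
    linarith
  rw [integral_add hf.sq.int (((hf.nn hg).cmul 2).add hg.sq).int,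
    integral_add ((hf.nn hg).int.const_mul 2) hg.sq.int, integral_const_mul, ← n2_sq f, ← n2_sq g] at h2
  nlinarith

theorem n2_norm (f : E2 → F) : n2 (fun x => ‖f x‖) = n2 f := by simp [n2]
theorem n2_neg (f : E2 → F) : n2 (fun x => - f x) = n2 f := by simp [n2]
theorem n2_sub {f g : E2 → F} (hf : Nc f) (hg : Nc g) : n2 (fun x => f x - g x) ≤ n2 f + n2 g := by
  have := n2_add hf hg.neg
  rw [n2_neg] at this
  simpa [sub_eq_add_neg] using this

/-- A bound for integrals of products. -/
theorem abs_int_le {f : E2 → F} {g : E2 → G} {h : E2 → ℝ} {C : ℝ} (hC : 0 ≤ C) (hf : Nc f) (hg : Nc g)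
    (hh : ∀ x, |h x| ≤ C * (‖f x‖ * ‖g x‖)) : |∫ x, h x| ≤ C * (n2 f * n2 g) := by
  calc |∫ x, h x| ≤ ∫ x, |h x| := abs_integral_le_integral_abs
    _ ≤ ∫ x, C * (‖f x‖ * ‖g x‖) := integral_mono_of_nonneg (ae_of_all _ fun x => abs_nonneg _)
        ((hf.nn hg).int.const_mul C) (ae_of_all _ hh)
    _ = C * ∫ x, (‖f x‖ * ‖g x‖) := integral_const_mul _ _
    _ ≤ _ := mul_le_mul_of_nonneg_left (cs hf hg) hC

end classes

/-! ### Schwartz functions -/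

theorem sch_nc (u : SchwartzMap E2 ℂ) : Nc (u : E2 → ℂ) :=
  ⟨u.continuous, u.integrable, ⟨_, fun x => SchwartzMap.norm_le_seminorm ℝ u x⟩⟩

/-- partial derivative -/
def pd (u : SchwartzMap E2 ℂ) (j : Fin 2) : SchwartzMap E2 ℂ :=
  (SchwartzMap.evalCLM ℝ E2 ℂ (e2 j) ∘L SchwartzMap.fderivCLM ℝ E2 ℂ) u

theorem pd_apply (u : SchwartzMap E2 ℂ) (j : Fin 2) (x : E2) :
    pd u j x = fderiv ℝ u x (e2 j) := rfl

theorem pd_sub (u v : SchwartzMap E2 ℂ) (j : Fin 2) : pd (u - v) j = pd u j - pd v j := by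
  simp [pd]

theorem lap_eq (u : SchwartzMap E2 ℂ) (x : E2) : lap u x = ∑ j, pd (pd u j) j x := rfl

theorem hasLine (u : SchwartzMap E2 ℂ) (j : Fin 2) (x : E2) :
    HasLineDerivAt ℝ u (pd u j x) x (e2 j) :=
  (u.differentiableAt.hasFDerivAt).hasLineDerivAt _

theorem sch_fderiv_eq (u : SchwartzMap E2 ℂ) (x v : E2) :
    fderiv ℝ u x v = ∑ j, (v j : ℂ) * pd u j x := by
  have : v = ∑ j, v j • e2 j := by
    ext i; fin_cases i <;> simp [e2, Fin.sum_univ_two]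
  conv_lhs => rw [this]
  simp [pd_apply]

theorem HasLineDerivAt.re' {f : E2 → ℂ} {f' : ℂ} {x v : E2} (h : HasLineDerivAt ℝ f f' x v) :
    HasLineDerivAt ℝ (fun x => (f x).re) f'.re x v :=
  (Complex.reCLM.hasFDerivAt.comp_hasDerivAt (0 : ℝ) h : _)
theorem HasLineDerivAt.im' {f : E2 → ℂ} {f' : ℂ} {x v : E2} (h : HasLineDerivAt ℝ f f' x v) :
    HasLineDerivAt ℝ (fun x => (f x).im) f'.im x v :=
  (Complex.imCLM.hasFDerivAt.comp_hasDerivAt (0 : ℝ) h : _)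
theorem HasLineDerivAt.mul' {f g : E2 → ℝ} {f' g' : ℝ} {x v : E2} (h : HasLineDerivAt ℝ f f' x v)
    (hg : HasLineDerivAt ℝ g g' x v) :
    HasLineDerivAt ℝ (fun x => f x * g x) (f' * g x + f x * g') x v := by
  have := HasDerivAt.mul h hg
  simp only [zero_smul, add_zero] at this
  exact this
theorem HasLineDerivAt.sub' {f g : E2 → ℝ} {f' g' : ℝ} {x v : E2} (h : HasLineDerivAt ℝ f f' x v)
    (hg : HasLineDerivAt ℝ g g' x v) :
    HasLineDerivAt ℝ (fun x => f x - g x) (f' - g') x v := HasDerivAt.sub h hg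
theorem HasLineDerivAt.add' {f g : E2 → ℝ} {f' g' : ℝ} {x v : E2} (h : HasLineDerivAt ℝ f f' x v)
    (hg : HasLineDerivAt ℝ g g' x v) :
    HasLineDerivAt ℝ (fun x => f x + g x) (f' + g') x v := HasDerivAt.add h hg

/-! ### Cutoffs -/

def bump0 : ContDiffBump (0 : E2) := ⟨1, 2, one_pos, one_lt_two⟩

def chi (r : ℝ) (x : E2) : ℝ := bump0 (r⁻¹ • x)

theorem chi_nonneg (r : ℝ) (x : E2) : 0 ≤ chi r x := bump0.nonneg
theorem chi_le (r : ℝ) (x : E2) : chi r x ≤ 1 := bump0.le_one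
theorem chi_contDiff (r : ℝ) : ContDiff ℝ 1 (chi r) :=
  bump0.contDiff.comp (contDiff_const_smul r⁻¹)
theorem chi_cont (r : ℝ) : Continuous (chi r) := (chi_contDiff r).continuous
theorem chi_bc (r : ℝ) : Bc (chi r) := ⟨chi_cont r, 1, fun x => by
  rw [Real.norm_of_nonneg (chi_nonneg r x)]; exact chi_le r x⟩
theorem chi_supp {r : ℝ} (hr : 0 < r) : HasCompactSupport (chi r) :=
  bump0.hasCompactSupport.comp_smul (inv_ne_zero hr.ne')
theorem chi_one {r : ℝ} (hr : 0 < r) {x : E2} (hx : ‖x‖ ≤ r) : chi r x = 1 := by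
  refine bump0.one_of_mem_closedBall ?_
  rw [mem_closedBall_zero_iff, norm_smul, norm_inv, Real.norm_of_nonneg hr.le]
  simp only [bump0]
  rw [inv_mul_le_iff₀ hr]; simpa using hx

def dchi (r : ℝ) (j : Fin 2) (x : E2) : ℝ := fderiv ℝ (chi r) x (e2 j)
theorem dchi_line (r : ℝ) (j : Fin 2) (x : E2) : HasLineDerivAt ℝ (chi r) (dchi r j x) x (e2 j) :=
  (((chi_contDiff r).differentiable one_ne_zero) x).hasFDerivAt.hasLineDerivAt _
theorem dchi_cont (r : ℝ) (j : Fin 2) : Continuous (dchi r j) :=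
  ((chi_contDiff r).continuous_fderiv one_ne_zero).clm_apply continuous_const

theorem dchi_bound : ∃ C, 0 ≤ C ∧ ∀ r, 0 < r → ∀ j x, |dchi r j x| ≤ C / r := by
  obtain ⟨C, hC⟩ := (bump0.hasCompactSupport.fderiv (𝕜 := ℝ)).exists_bound_of_continuous
    ((bump0.contDiff (n := 1)).continuous_fderiv one_ne_zero)
  have hC0 : 0 ≤ C := (norm_nonneg _).trans (hC 0)
  refine ⟨C, hC0, fun r hr j x => ?_⟩
  have h1 : HasFDerivAt (chi r) ((fderiv ℝ bump0 (r⁻¹ • x)).comp (r⁻¹ • ContinuousLinearMap.id ℝ E2)) x :=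
    HasFDerivAt.comp x (((bump0.contDiff (n := 1)).differentiable one_ne_zero) _).hasFDerivAt
      ((hasFDerivAt_id x).const_smul r⁻¹)
  rw [dchi, h1.fderiv]
  simp only [ContinuousLinearMap.comp_apply, smul_apply, ContinuousLinearMap.id_apply, map_smul, smul_eq_mul]
  rw [abs_mul, abs_of_pos (inv_pos.2 hr), div_eq_inv_mul]
  refine mul_le_mul_of_nonneg_left ?_ (inv_pos.2 hr).le
  have := (fderiv ℝ bump0 (r⁻¹ • x)).le_opNorm (e2 j)
  rw [show ‖e2 j‖ = 1 by simp [e2], mul_one] at this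
  exact this.trans (hC _)

theorem dchi_bc {r : ℝ} (hr : 0 < r) (j : Fin 2) : Bc (dchi r j) := by
  obtain ⟨C, _, hC⟩ := dchi_bound
  exact ⟨dchi_cont r j, _, fun x => hC r hr j x⟩

theorem chi_tendsto (x : E2) : Tendsto (fun n : ℕ => chi (n + 1) x) atTop (𝓝 1) := by
  refine tendsto_const_nhds.congr' ?_
  obtain ⟨N, hN⟩ := exists_nat_ge ‖x‖
  filter_upwards [eventually_ge_atTop N] with n hn
  refine (chi_one (by positivity) ?_).symm
  have : (N : ℝ) ≤ n := by exact_mod_cast hn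
  linarith

theorem chi_int_tendsto {f : E2 → ℝ} (hf : Integrable f) :
    Tendsto (fun n : ℕ => ∫ x, chi (n + 1) x * f x) atTop (𝓝 (∫ x, f x)) := by
  refine tendsto_integral_of_dominated_convergence (fun x => ‖f x‖)
    (fun n => (chi_cont _).aestronglyMeasurable.mul hf.1) hf.norm
    (fun n => ae_of_all _ fun x => ?_) (ae_of_all _ fun x => ?_)
  · rw [norm_mul, Real.norm_of_nonneg (chi_nonneg _ _)]
    exact mul_le_of_le_one_left (norm_nonneg _) (chi_le _ _)
  · simpa using (chi_tendsto x).mul_const (f x)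

theorem int_le_of_chi {f : E2 → ℝ} (hf : Integrable f) {c : ℝ}
    (h : ∀ n : ℕ, ∫ x, chi (n + 1) x * f x ≤ c) : ∫ x, f x ≤ c :=
  le_of_tendsto' (chi_int_tendsto hf) h

theorem chi_int_le {f : E2 → ℝ} (hf : Integrable f) (h0 : ∀ x, 0 ≤ f x) (r : ℝ) :
    ∫ x, chi r x * f x ≤ ∫ x, f x :=
  integral_mono_of_nonneg (ae_of_all _ fun x => mul_nonneg (chi_nonneg _ _) (h0 x)) hf
    (ae_of_all _ fun x => mul_le_of_le_one_left (h0 x) (chi_le _ _))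

theorem cut_cont {χ : E2 → ℝ} (hχ : Continuous χ) (hs : HasCompactSupport χ) {G : ℝ → E2 → ℝ}
    (hG : Continuous (Function.uncurry G)) : Continuous fun t => ∫ x, χ x * G t x := by
  have h : ∀ t, ∫ x, χ x * G t x = ∫ x in tsupport χ, χ x * G t x := fun t => by
    refine (setIntegral_eq_integral_of_forall_compl_eq_zero fun x hx => ?_).symm
    rw [image_eq_zero_of_notMem_tsupport hx, zero_mul]
  simp_rw [h]
  refine continuous_parametric_integral_of_continuous (f := fun t x => χ x * G t x) ?_ hs
  exact (hχ.comp continuous_snd).mul hG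

theorem cut_deriv {χ : E2 → ℝ} (hχ : Continuous χ) (hs : HasCompactSupport χ) {G G' : ℝ → E2 → ℝ}
    (hG : Continuous (Function.uncurry G)) (hG' : Continuous (Function.uncurry G'))
    (hd : ∀ t x, HasDerivAt (fun s => G s x) (G' t x) t) (t : ℝ) :
    HasDerivAt (fun t => ∫ x, χ x * G t x) (∫ x, χ x * G' t x) t := by
  have hc : ∀ (H : ℝ → E2 → ℝ), Continuous (Function.uncurry H) → ∀ t, Continuous fun x => χ x * H t x :=
    fun H hH t => hχ.mul (hH.comp (continuous_const.prodMk continuous_id))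
  obtain ⟨M, hM⟩ := ((isCompact_Icc (a := t - 1) (b := t + 1)).prod hs).exists_bound_of_continuousOn
    (hG'.continuousOn)
  have hcs : ∀ (H : ℝ → E2 → ℝ), Continuous (Function.uncurry H) → ∀ t, Integrable fun x => χ x * H t x :=
    fun H hH t => (hc H hH t).integrable_of_hasCompactSupport (hs.mul_right)
  refine (hasDerivAt_integral_of_dominated_loc_of_deriv_le (F := fun t x => χ x * G t x)
    (F' := fun t x => χ x * G' t x) (bound := fun x => |χ x| * M) (s := Icc (t - 1) (t + 1))
    (Icc_mem_nhds (by linarith) (by linarith)) (Eventually.of_forall fun s => (hc G hG s).aestronglyMeasurable)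
    (hcs G hG t) (hc G' hG' t).aestronglyMeasurable (ae_of_all _ fun x s hs' => ?_) ?_
    (ae_of_all _ fun x s _ => (hd s x).const_mul _)).2
  · rw [norm_mul, Real.norm_eq_abs]
    by_cases hx : x ∈ tsupport χ
    · exact mul_le_mul_of_nonneg_left (hM (s, x) ⟨hs', hx⟩) (abs_nonneg _)
    · simp [image_eq_zero_of_notMem_tsupport hx]
  · refine (hχ.abs.mul continuous_const).integrable_of_hasCompactSupport ?_
    exact (hs.norm).mul_right


/-! ### The kernel -/

/-- squared norm as a polynomial -/
def q2 (x : E2) : ℝ := x 0 ^ 2 + x 1 ^ 2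

theorem q2_eq (x : E2) : q2 x = ‖x‖ ^ 2 := by
  rw [EuclideanSpace.norm_sq_eq, Fin.sum_univ_two]; simp [q2]
theorem q2_nonneg (x : E2) : 0 ≤ q2 x := by unfold q2; positivity

theorem coord_cont (j : Fin 2) : Continuous fun x : E2 => x j := by fun_prop
theorem q2_cont : Continuous q2 := by unfold q2; fun_prop

theorem K_zero (R : ℝ) (x : E2) : K R x 0 = ((max R ‖x‖) ^ 2)⁻¹ * (-(x 1)) := by
  simp [K, perp]
theorem K_one (R : ℝ) (x : E2) : K R x 1 = ((max R ‖x‖) ^ 2)⁻¹ * (x 0) := by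
  simp [K, perp]

theorem abs_coord_le (x : E2) (j : Fin 2) : |x j| ≤ ‖x‖ := PiLp.norm_apply_le x j

theorem K_cont {R : ℝ} (hR : 0 < R) (j : Fin 2) : Continuous fun x => K R x j := by
  have hne : ∀ x : E2, (max R ‖x‖) ^ 2 ≠ 0 := fun x =>
    pow_ne_zero _ (lt_of_lt_of_le hR (le_max_left _ _)).ne'
  have h1 : Continuous fun x : E2 => ((max R ‖x‖) ^ 2)⁻¹ :=
    ((continuous_const.max continuous_norm).pow 2).inv₀ hne
  fin_cases j
  · simp only [Fin.zero_eta, K_zero]; exact h1.mul (coord_cont 1).neg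
  · simp only [Fin.mk_one, K_one]; exact h1.mul (coord_cont 0)

theorem K_le_max {R : ℝ} (hR : 0 < R) (x : E2) (j : Fin 2) : |K R x j| ≤ (max R ‖x‖)⁻¹ := by
  have hm : 0 < max R ‖x‖ := lt_of_lt_of_le hR (le_max_left _ _)
  have key : ∀ i : Fin 2, ((max R ‖x‖) ^ 2)⁻¹ * |x i| ≤ (max R ‖x‖)⁻¹ := fun i => by
    have : |x i| ≤ max R ‖x‖ := (abs_coord_le x i).trans (le_max_right _ _)
    calc ((max R ‖x‖) ^ 2)⁻¹ * |x i| ≤ ((max R ‖x‖) ^ 2)⁻¹ * max R ‖x‖ := by gcongr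
      _ = (max R ‖x‖)⁻¹ := by field_simp
  fin_cases j
  · simp only [Fin.zero_eta, K_zero, abs_mul, abs_neg]
    rw [abs_of_pos (by positivity)]; exact key 1
  · simp only [Fin.mk_one, K_one, abs_mul]
    rw [abs_of_pos (by positivity)]; exact key 0

theorem K_bound {R : ℝ} (hR : 0 < R) (x : E2) (j : Fin 2) : |K R x j| ≤ R⁻¹ :=
  (K_le_max hR x j).trans (inv_anti₀ hR (le_max_left _ _))

theorem K_bound2 {R : ℝ} (hR : 0 < R) (x : E2) (j : Fin 2) : |K R x j| ≤ 2 * (√(R ^ 2 + q2 x))⁻¹ := by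
  refine (K_le_max hR x j).trans ?_
  have hm : 0 < max R ‖x‖ := lt_of_lt_of_le hR (le_max_left _ _)
  have hs : 0 < √(R ^ 2 + q2 x) := Real.sqrt_pos.2 (by have := q2_nonneg x; positivity)
  have h2 : √(R ^ 2 + q2 x) ≤ 2 * max R ‖x‖ := by
    refine Real.sqrt_le_iff.2 ⟨by positivity, ?_⟩
    rw [q2_eq]
    have h1 : R ^ 2 ≤ (max R ‖x‖) ^ 2 := pow_le_pow_left₀ hR.le (le_max_left _ _) 2
    have h2 : ‖x‖ ^ 2 ≤ (max R ‖x‖) ^ 2 := pow_le_pow_left₀ (norm_nonneg _) (le_max_right _ _) 2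
    nlinarith
  rw [← div_eq_mul_inv, le_div_iff₀ hs, inv_mul_le_iff₀ hm]; linarith

theorem K_odd (R : ℝ) (x : E2) (j : Fin 2) : K R (-x) j = - K R x j := by
  fin_cases j <;> simp [K_zero, K_one]
theorem K_odd' (R : ℝ) (x y : E2) (j : Fin 2) : K R (x - y) j = - K R (y - x) j := by
  rw [← K_odd]; simp

/-! ### integration by parts -/

theorem ibp {f f' φ φ' : E2 → ℝ} {v : E2} (hf : Bc f) (hf' : Bc f') (hφ : Nc φ) (hφ' : Nc φ')
    (h1 : ∀ x, HasLineDerivAt ℝ f (f' x) x v) (h2 : ∀ x, HasLineDerivAt ℝ φ (φ' x) x v) :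
    ∫ x, f x * φ' x = - ∫ x, f' x * φ x :=
  integral_bilinear_hasLineDerivAt_right_eq_neg_left_of_integrable (μ := (volume : Measure E2))
    (B := ContinuousLinearMap.mul ℝ ℝ) (hf'.mulNc hφ).int (hf.mulNc hφ').int (hf.mulNc hφ).int
    (fun x _ => h1 x) (fun x _ => h2 x)

theorem line_coord (i j : Fin 2) (x : E2) :
    HasLineDerivAt ℝ (fun x : E2 => x i) (if i = j then 1 else 0) x (e2 j) := by
  have : HasDerivAt (fun t : ℝ => x i + t * (e2 j) i) (1 * (e2 j) i) 0 :=
    ((hasDerivAt_id (0 : ℝ)).mul_const _).const_add _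
  have h2 : 1 * (e2 j) i = if i = j then (1 : ℝ) else 0 := by
    simp [e2]
  rw [h2] at this
  exact this

theorem line_q2 (j : Fin 2) (x : E2) : HasLineDerivAt ℝ q2 (2 * x j) x (e2 j) := by
  have h0 := line_coord 0 j x
  have h1 := line_coord 1 j x
  have := (h0.mul' h0).add' (h1.mul' h1)
  have e : (fun x : E2 => x 0 * x 0 + x 1 * x 1) = q2 := by ext x; simp [q2, pow_two]
  rw [e] at this
  convert this using 1
  fin_cases j <;> simp <;> ring

theorem line_comp {g : ℝ → ℝ} {g' : ℝ} {f : E2 → ℝ} {f' : ℝ} {x v : E2}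
    (hg : HasDerivAt g g' (f x)) (hf : HasLineDerivAt ℝ f f' x v) :
    HasLineDerivAt ℝ (fun x => g (f x)) (g' * f') x v := by
  have hg' : HasDerivAt g g' (f (x + (0 : ℝ) • v)) := by simpa using hg
  exact HasDerivAt.comp (0 : ℝ) hg' hf

/-- denominators of the smoothed kernels -/
def den (R δ s : ℝ) : ℝ := R ^ 2 + s + √((s - R ^ 2) ^ 2 + δ ^ 2)

theorem den_ge {R δ s : ℝ} : R ^ 2 + s + |s - R ^ 2| ≤ den R δ s := by
  unfold den
  gcongr
  exact Real.abs_le_sqrt (by nlinarith [sq_nonneg δ])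

theorem den_ge1 {R δ s : ℝ} : 2 * R ^ 2 ≤ den R δ s := by
  have := den_ge (R := R) (δ := δ) (s := s)
  have := neg_abs_le (s - R ^ 2)
  linarith
theorem den_ge2 {R δ s : ℝ} : R ^ 2 + s ≤ den R δ s := by
  have := den_ge (R := R) (δ := δ) (s := s)
  have := abs_nonneg (s - R ^ 2)
  linarith
theorem den_pos {R δ s : ℝ} (hR : 0 < R) : 0 < den R δ s :=
  lt_of_lt_of_le (by positivity) den_ge1
theorem den_cont (R δ : ℝ) : Continuous (den R δ) := by unfold den; fun_prop

def gk (R δ s : ℝ) : ℝ := 2 / den R δ s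
def gk' (R δ s : ℝ) : ℝ :=
  -(2 * (1 + (s - R ^ 2) / √((s - R ^ 2) ^ 2 + δ ^ 2))) / (den R δ s) ^ 2

theorem gk_deriv {R δ : ℝ} (hR : 0 < R) (hδ : 0 < δ) (s : ℝ) : HasDerivAt (gk R δ) (gk' R δ s) s := by
  have hp : 0 < (s - R ^ 2) ^ 2 + δ ^ 2 := by positivity
  have h1 : HasDerivAt (fun s : ℝ => (s - R ^ 2) ^ 2 + δ ^ 2) (2 * (s - R ^ 2)) s := by
    have := (((hasDerivAt_id s).sub_const (R ^ 2)).pow 2).add_const (δ ^ 2)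
    simpa using this
  have h2 := h1.sqrt hp.ne'
  have h3 : HasDerivAt (den R δ) (1 + (2 * (s - R ^ 2)) / (2 * √((s - R ^ 2) ^ 2 + δ ^ 2))) s :=
    ((hasDerivAt_id s).const_add (R ^ 2)).add h2
  have h4 := (hasDerivAt_const s (2 : ℝ)).div h3 (den_pos hR).ne'
  refine h4.congr_deriv ?_
  unfold gk'
  have hs : √((s - R ^ 2) ^ 2 + δ ^ 2) ≠ 0 := (Real.sqrt_pos.2 hp).ne'
  congr 1
  field_simp
  ring

theorem gk'_cont {R δ : ℝ} (hR : 0 < R) (hδ : 0 < δ) : Continuous (gk' R δ) := by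
  have hs : ∀ s, √((s - R ^ 2) ^ 2 + δ ^ 2) ≠ 0 := fun s => (Real.sqrt_pos.2 (by positivity)).ne'
  unfold gk'
  have hd := den_cont R δ
  have hd0 : ∀ s, den R δ s ^ 2 ≠ 0 := fun s => pow_ne_zero _ (den_pos hR).ne'
  refine Continuous.div ?_ (hd.pow 2) hd0
  refine (continuous_const.mul (continuous_const.add (Continuous.div (by fun_prop) (by fun_prop) hs))).neg

theorem gk_cont {R δ : ℝ} (hR : 0 < R) : Continuous (gk R δ) :=
  continuous_const.div (den_cont R δ) fun s => (den_pos hR).ne'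

theorem gk_pos {R δ s : ℝ} (hR : 0 < R) : 0 < gk R δ s := div_pos two_pos (den_pos hR)

theorem gk'_abs {R δ s : ℝ} (hR : 0 < R) (hδ : 0 < δ) (hs : 0 ≤ s) : |s * gk' R δ s| ≤ 4 / R ^ 2 := by
  have hp : 0 < √((s - R ^ 2) ^ 2 + δ ^ 2) := Real.sqrt_pos.2 (by positivity)
  have h1 : |(s - R ^ 2) / √((s - R ^ 2) ^ 2 + δ ^ 2)| ≤ 1 := by
    rw [abs_div, abs_of_pos hp, div_le_one hp]
    exact Real.abs_le_sqrt (by nlinarith [sq_nonneg δ])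
  have h2 : |2 * (1 + (s - R ^ 2) / √((s - R ^ 2) ^ 2 + δ ^ 2))| ≤ 4 := by
    rw [abs_le] at h1 ⊢
    constructor <;> linarith [h1.1, h1.2]
  have hd := den_pos (R := R) (δ := δ) (s := s) hR
  unfold gk'
  rw [abs_mul, abs_div, abs_neg, abs_of_nonneg hs, abs_of_pos (pow_pos hd 2), ← mul_div_assoc,
    div_le_div_iff₀ (pow_pos hd 2) (by positivity)]
  have h3 := den_ge1 (R := R) (δ := δ) (s := s)
  have h4 := den_ge2 (R := R) (δ := δ) (s := s)
  have h5 : s * R ^ 2 ≤ den R δ s ^ 2 := by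
    rw [pow_two (den R δ s)]
    exact mul_le_mul (by nlinarith) (by nlinarith) (by positivity) hd.le
  calc s * |2 * (1 + (s - R ^ 2) / √((s - R ^ 2) ^ 2 + δ ^ 2))| * R ^ 2
      ≤ s * 4 * R ^ 2 := by gcongr
    _ ≤ 4 * den R δ s ^ 2 := by nlinarith

theorem gk_coord {R δ : ℝ} (hR : 0 < R) (x : E2) (i : Fin 2) : |x i * gk R δ (q2 x)| ≤ R⁻¹ := by
  have hd := den_pos (R := R) (δ := δ) (s := q2 x) hR
  rw [abs_mul, abs_of_pos (gk_pos hR), gk, ← mul_div_assoc, div_le_iff₀ hd, inv_mul_eq_div, le_div_iff₀ hR]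
  have h4 := den_ge2 (R := R) (δ := δ) (s := q2 x)
  have h1 := abs_coord_le x i
  rw [q2_eq] at h4
  rw [q2_eq]
  nlinarith [sq_nonneg (R - ‖x‖), norm_nonneg x]

theorem div_smooth {R δ : ℝ} (hR : 0 < R) (hδ : 0 < δ) {φ : E2 → ℝ} {dφ : Fin 2 → E2 → ℝ} (hφ : Nc φ)
    (hdφ : ∀ j, Nc (dφ j)) (hd : ∀ j x, HasLineDerivAt ℝ φ (dφ j x) x (e2 j)) :
    ∫ x, (x 1 * gk R δ (q2 x) * dφ 0 x - x 0 * gk R δ (q2 x) * dφ 1 x) = 0 := by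
  have hb : ∀ i, Bc fun x : E2 => x i * gk R δ (q2 x) := fun i =>
    ⟨(coord_cont i).mul ((gk_cont hR).comp q2_cont), _, fun x => gk_coord hR x i⟩
  have hb' : Bc fun x : E2 => 2 * (x 0 * x 1 * gk' R δ (q2 x)) := by
    refine ⟨continuous_const.mul (((coord_cont 0).mul (coord_cont 1)).mul ((gk'_cont hR hδ).comp q2_cont)),
      4 / R ^ 2, fun x => ?_⟩
    refine le_trans ?_ (gk'_abs hR hδ (q2_nonneg x))
    show |2 * (x 0 * x 1 * gk' R δ (q2 x))| ≤ _
    rw [← mul_assoc, abs_mul, abs_mul (q2 x)]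
    refine mul_le_mul_of_nonneg_right ?_ (abs_nonneg _)
    rw [abs_of_nonneg (q2_nonneg x), q2, abs_le]
    constructor <;> nlinarith [sq_nonneg (x 0 + x 1), sq_nonneg (x 0 - x 1)]
  have key : ∀ i j : Fin 2, i ≠ j → ∀ x, HasLineDerivAt ℝ (fun x : E2 => x i * gk R δ (q2 x))
      (2 * (x 0 * x 1 * gk' R δ (q2 x))) x (e2 j) := fun i j hij x => by
    have := (line_coord i j x).mul' (line_comp (gk_deriv hR hδ (q2 x)) (line_q2 j x))
    convert this using 1
    fin_cases i <;> fin_cases j <;> simp at hij ⊢ <;> ring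
  have e0 := ibp (hb 1) hb' hφ (hdφ 0) (key 1 0 (by decide)) (hd 0)
  have e1 := ibp (hb 0) hb' hφ (hdφ 1) (key 0 1 (by decide)) (hd 1)
  rw [integral_sub ((hb 1).mulNc (hdφ 0)).int ((hb 0).mulNc (hdφ 1)).int, e0, e1, sub_self]

theorem gk_tendsto {R : ℝ} (hR : 0 < R) (x : E2) :
    Tendsto (fun n : ℕ => gk R (1 / ((n : ℝ) + 1)) (q2 x)) atTop (𝓝 ((max R ‖x‖) ^ 2)⁻¹) := by
  have hc : Continuous fun δ : ℝ => gk R δ (q2 x) := by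
    unfold gk
    refine continuous_const.div ?_ fun δ => (den_pos hR).ne'
    unfold den; fun_prop
  have h := (hc.tendsto 0).comp tendsto_one_div_add_atTop_nhds_zero_nat
  have e : gk R 0 (q2 x) = ((max R ‖x‖) ^ 2)⁻¹ := by
    have : (max R ‖x‖) ^ 2 = max (R ^ 2) (‖x‖ ^ 2) := by
      rcases le_total R ‖x‖ with h | h
      · rw [max_eq_right h, max_eq_right (pow_le_pow_left₀ hR.le h 2)]
      · rw [max_eq_left h, max_eq_left (pow_le_pow_left₀ (norm_nonneg _) h 2)]
    rw [this, gk, den, q2_eq]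
    simp only [ne_eq, OfNat.ofNat_ne_zero, not_false_eq_true, zero_pow, add_zero, Real.sqrt_sq_eq_abs]
    have hR2 : 0 < R ^ 2 := by positivity
    rcases le_total (R ^ 2) (‖x‖ ^ 2) with h | h
    · have h3 : 0 < ‖x‖ ^ 2 := lt_of_lt_of_le hR2 h
      rw [max_eq_right h, abs_of_nonneg (by linarith),
        show R ^ 2 + ‖x‖ ^ 2 + (‖x‖ ^ 2 - R ^ 2) = 2 * ‖x‖ ^ 2 by ring]
      rw [← one_div, div_eq_div_iff (by positivity) h3.ne']; ring
    · rw [max_eq_left h, abs_of_nonpos (by linarith),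
        show R ^ 2 + ‖x‖ ^ 2 + -(‖x‖ ^ 2 - R ^ 2) = 2 * R ^ 2 by ring]
      rw [← one_div, div_eq_div_iff (by positivity) hR2.ne']; ring
  rw [e] at h
  exact h

theorem div0 {R : ℝ} (hR : 0 < R) {φ : E2 → ℝ} {dφ : Fin 2 → E2 → ℝ} (hφ : Nc φ)
    (hdφ : ∀ j, Nc (dφ j)) (hd : ∀ j x, HasLineDerivAt ℝ φ (dφ j x) x (e2 j)) :
    ∫ x, ∑ j, K R x j * dφ j x = 0 := by
  have hlim : Tendsto (fun n : ℕ => ∫ x, (x 1 * gk R (1 / ((n : ℝ) + 1)) (q2 x) * dφ 0 x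
      - x 0 * gk R (1 / ((n : ℝ) + 1)) (q2 x) * dφ 1 x)) atTop
      (𝓝 (∫ x, -∑ j, K R x j * dφ j x)) := by
    refine tendsto_integral_of_dominated_convergence
      (fun x => R⁻¹ * (‖dφ 0 x‖ + ‖dφ 1 x‖)) (fun n => ?_)
      (((hdφ 0).norm.add (hdφ 1).norm).cmul _).int
      (fun n => ae_of_all _ fun x => ?_) (ae_of_all _ fun x => ?_)
    · have hg : Continuous fun x => gk R (1 / ((n : ℝ) + 1)) (q2 x) := (gk_cont hR).comp q2_cont
      exact ((((coord_cont 1).mul hg).mul (hdφ 0).1).sub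
        (((coord_cont 0).mul hg).mul (hdφ 1).1)).aestronglyMeasurable
    · refine (norm_sub_le _ _).trans ?_
      rw [norm_mul (_ * _), norm_mul (_ * _), mul_add]
      gcongr
      · exact gk_coord hR x 1
      · exact gk_coord hR x 0
    · have h := gk_tendsto hR x
      have := ((h.const_mul (x 1)).mul_const (dφ 0 x)).sub ((h.const_mul (x 0)).mul_const (dφ 1 x))
      convert this using 2
      rw [Fin.sum_univ_two, K_zero, K_one]; ring
  have h0 : (fun n : ℕ => ∫ x, (x 1 * gk R (1 / ((n : ℝ) + 1)) (q2 x) * dφ 0 x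
      - x 0 * gk R (1 / ((n : ℝ) + 1)) (q2 x) * dφ 1 x)) = fun _ => 0 := by
    ext n; exact div_smooth hR (by positivity) hφ hdφ hd
  rw [h0] at hlim
  have := tendsto_nhds_unique hlim tendsto_const_nhds
  rw [integral_neg] at this
  linarith

theorem Nc.shift {φ : E2 → ℝ} (h : Nc φ) (x : E2) : Nc fun y => φ (x - y) := by
  refine ⟨h.1.comp (continuous_const.sub continuous_id), h.int.comp_sub_left x, ?_⟩
  obtain ⟨C, hC⟩ := h.2.2
  exact ⟨C, fun y => hC _⟩

theorem line_shift {φ : E2 → ℝ} {d : ℝ} {x y v : E2} (h : HasLineDerivAt ℝ φ d (x - y) v) :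
    HasLineDerivAt ℝ (fun y => φ (x - y)) (-d) y v := by
  have h' : HasDerivAt (fun t : ℝ => φ (x - y + t • v)) d (-(0 : ℝ)) := by rw [neg_zero]; exact h
  have := HasDerivAt.comp (0 : ℝ) h' (hasDerivAt_neg (0 : ℝ))
  have e : (fun t : ℝ => φ (x - (y + t • v))) = (fun t : ℝ => φ (x - y + t • v)) ∘ Neg.neg := by
    funext t
    simp only [Function.comp]
    congr 1
    rw [neg_smul]; abel
  unfold HasLineDerivAt
  rw [e]
  exact this.congr_deriv (by ring)

/-- `K_R` is (weakly) divergence free. -/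
theorem div1 {R : ℝ} (hR : 0 < R) {φ : E2 → ℝ} {dφ : Fin 2 → E2 → ℝ} (hφ : Nc φ)
    (hdφ : ∀ j, Nc (dφ j)) (hd : ∀ j x, HasLineDerivAt ℝ φ (dφ j x) x (e2 j)) (x : E2) :
    ∫ y, ∑ j, K R (x - y) j * dφ j y = 0 := by
  have h := div0 hR (φ := fun y => φ (x - y)) (dφ := fun j y => - dφ j (x - y)) (hφ.shift x)
    (fun j => ((hdφ j).shift x).neg) (fun j y => line_shift (hd j (x - y)))
  rw [← integral_sub_left_eq_self _ _ x] at h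
  have e : ∀ a : E2, x - (x - a) = a := fun a => by abel
  simp only [e, mul_neg, Finset.sum_neg_distrib, integral_neg, neg_eq_zero] at h
  exact h

/-- Hardy-type inequality. -/
theorem hardy {R : ℝ} (hR : 0 < R) {φ : E2 → ℝ} {dφ : Fin 2 → E2 → ℝ} (hφ : Nc φ) (h0 : ∀ x, 0 ≤ φ x)
    (hdφ : ∀ j, Nc (dφ j)) (hd : ∀ j x, HasLineDerivAt ℝ φ (dφ j x) x (e2 j)) :
    ∫ x, (√(R ^ 2 + q2 x))⁻¹ * φ x ≤ ∑ j, ∫ x, |dφ j x| := by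
  set s : E2 → ℝ := fun x => √(R ^ 2 + q2 x) with hs
  have hpos : ∀ x, 0 < s x := fun x => Real.sqrt_pos.2 (by have := q2_nonneg x; positivity)
  have hsq : ∀ x, s x ^ 2 = R ^ 2 + q2 x := fun x => Real.sq_sqrt (by have := q2_nonneg x; positivity)
  have hRs : ∀ x, R ≤ s x := fun x => Real.le_sqrt_of_sq_le (by have := q2_nonneg x; linarith)
  have hsc : Continuous s := (continuous_const.add q2_cont).sqrt
  have hsi : Continuous fun x => (s x)⁻¹ := hsc.inv₀ fun x => (hpos x).ne'
  have hsib : ∀ x, (s x)⁻¹ ≤ R⁻¹ := fun x => inv_anti₀ hR (hRs x)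
  have hxj : ∀ x j, (x j) ^ 2 ≤ q2 x := fun x j => by
    unfold q2
    fin_cases j
    · exact le_add_of_nonneg_right (sq_nonneg _)
    · exact le_add_of_nonneg_left (sq_nonneg _)
  have hxs : ∀ x j, |x j * (s x)⁻¹| ≤ 1 := fun x j => by
    rw [abs_mul, abs_of_pos (inv_pos.2 (hpos x)), ← div_eq_mul_inv, div_le_one (hpos x)]
    refine abs_le_of_sq_le_sq ?_ (hpos x).le |> fun h => h
    rw [hsq]; have := hxj x j; nlinarith
  have hW : ∀ j, Bc fun x : E2 => x j * (s x)⁻¹ := fun j =>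
    ⟨(coord_cont j).mul hsi, 1, fun x => hxs x j⟩
  have hW' : ∀ j, Bc fun x : E2 => (s x)⁻¹ - (x j * (s x)⁻¹) ^ 2 * (s x)⁻¹ := fun j => by
    refine ⟨hsi.sub (((hW j).1.pow 2).mul hsi), R⁻¹ + R⁻¹, fun x => (norm_sub_le _ _).trans ?_⟩
    rw [norm_mul, norm_pow, Real.norm_of_nonneg (inv_pos.2 (hpos x)).le]
    have h1 : ‖x j * (s x)⁻¹‖ ^ 2 ≤ 1 := pow_le_one₀ (norm_nonneg _) (hxs x j)
    have h2 := hsib x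
    have h3 : ‖x j * (s x)⁻¹‖ ^ 2 * (s x)⁻¹ ≤ 1 * (s x)⁻¹ := by
      gcongr
    linarith
  have hline : ∀ j x, HasLineDerivAt ℝ (fun x : E2 => x j * (s x)⁻¹)
      ((s x)⁻¹ - (x j * (s x)⁻¹) ^ 2 * (s x)⁻¹) x (e2 j) := fun j x => by
    have hq : R ^ 2 + q2 x ≠ 0 := by rw [← hsq]; exact (pow_pos (hpos x) 2).ne'
    have hg : HasDerivAt (fun q : ℝ => (√(R ^ 2 + q))⁻¹)
        (-(1 / (2 * √(R ^ 2 + q2 x))) / (√(R ^ 2 + q2 x)) ^ 2) (q2 x) :=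
      HasDerivAt.inv (((hasDerivAt_id _).const_add _).sqrt hq) (hpos x).ne'
    have := (line_coord j j x).mul' (line_comp hg (line_q2 j x))
    convert this using 1
    have := (hpos x).ne'
    simp only [hs] at this ⊢
    simp only [if_true]
    field_simp
    ring
  have hibp : ∀ j, ∫ x, ((s x)⁻¹ - (x j * (s x)⁻¹) ^ 2 * (s x)⁻¹) * φ x ≤ ∫ x, |dφ j x| := fun j => by
    have e := ibp (hW j) (hW' j) hφ (hdφ j) (hline j) (hd j)
    have : ∫ x, ((s x)⁻¹ - (x j * (s x)⁻¹) ^ 2 * (s x)⁻¹) * φ x = ∫ x, -(x j * (s x)⁻¹ * dφ j x) := by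
      rw [integral_neg, e, neg_neg]
    rw [this]
    refine integral_mono ((hW j).mulNc (hdφ j)).neg.int (hdφ j).norm.int fun x => ?_
    refine (neg_le_abs _).trans ?_
    rw [abs_mul]
    exact mul_le_of_le_one_left (abs_nonneg _) (hxs x j)
  have hsum : ∫ x, (s x)⁻¹ * φ x ≤ ∑ j, ∫ x, ((s x)⁻¹ - (x j * (s x)⁻¹) ^ 2 * (s x)⁻¹) * φ x := by
    rw [← integral_finsetSum _ fun j _ => ((hW' j).mulNc hφ).int]
    have hb : Bc fun x => (s x)⁻¹ := ⟨hsi, R⁻¹, fun x => by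
      rw [Real.norm_of_nonneg (inv_pos.2 (hpos x)).le]; exact hsib x⟩
    refine integral_mono (hb.mulNc hφ).int (Nc.sum fun j _ => (hW' j).mulNc hφ).int fun x => ?_
    simp only [Fin.sum_univ_two]
    rw [← add_mul]
    refine mul_le_mul_of_nonneg_right ?_ (h0 x)
    have h1 : (x 0 * (s x)⁻¹) ^ 2 + (x 1 * (s x)⁻¹) ^ 2 ≤ 1 := by
      rw [mul_pow, mul_pow, ← add_mul, inv_pow, ← div_eq_mul_inv, div_le_one (pow_pos (hpos x) 2), hsq, q2]
      nlinarith
    nlinarith [inv_pos.2 (hpos x)]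
  exact hsum.trans (Finset.sum_le_sum fun j _ => hibp j)


/-! ### Scalar convolutions with the kernel -/

/-- scalar convolution with a component of the kernel -/
def kc (R : ℝ) (f : E2 → ℝ) (j : Fin 2) (x : E2) : ℝ := ∫ y, f y * K R (x - y) j

theorem kc_nc {R : ℝ} (hR : 0 < R) {f : E2 → ℝ} (hf : Nc f) (j : Fin 2) (x : E2) :
    Nc fun y => f y * K R (x - y) j :=
  hf.mulBc ⟨(K_cont hR j).comp (continuous_const.sub continuous_id), _, fun y => K_bound hR _ j⟩

theorem kc_bound {R : ℝ} (hR : 0 < R) {f : E2 → ℝ} (hf : Nc f) (j : Fin 2) (x : E2) :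
    |kc R f j x| ≤ R⁻¹ * ∫ y, |f y| := by
  rw [← integral_const_mul]
  refine abs_integral_le_integral_abs.trans ?_
  refine integral_mono (kc_nc hR hf j x).norm.int (hf.norm.int.const_mul _) fun y => ?_
  simp only [abs_mul, Real.norm_eq_abs]
  rw [mul_comm]
  gcongr
  exact K_bound hR _ j

theorem kc_bc {R : ℝ} (hR : 0 < R) {f : E2 → ℝ} (hf : Nc f) (j : Fin 2) : Bc (kc R f j) := by
  refine ⟨?_, _, fun x => kc_bound hR hf j x⟩
  refine continuous_of_dominated (bound := fun y => R⁻¹ * ‖f y‖)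
    (fun x => (kc_nc hR hf j x).1.aestronglyMeasurable) (fun x => ae_of_all _ fun y => ?_)
    (hf.norm.int.const_mul _) (ae_of_all _ fun y => ?_)
  · rw [norm_mul, mul_comm]
    gcongr
    exact K_bound hR _ j
  · exact continuous_const.mul ((K_cont hR j).comp (continuous_id.sub continuous_const))

theorem kc_add {R : ℝ} (hR : 0 < R) {f g : E2 → ℝ} (hf : Nc f) (hg : Nc g) (j : Fin 2) (x : E2) :
    kc R (fun y => f y + g y) j x = kc R f j x + kc R g j x := by
  unfold kc
  rw [← integral_add (kc_nc hR hf j x).int (kc_nc hR hg j x).int]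
  simp only [add_mul]
theorem kc_sub {R : ℝ} (hR : 0 < R) {f g : E2 → ℝ} (hf : Nc f) (hg : Nc g) (j : Fin 2) (x : E2) :
    kc R (fun y => f y - g y) j x = kc R f j x - kc R g j x := by
  unfold kc
  rw [← integral_sub (kc_nc hR hf j x).int (kc_nc hR hg j x).int]
  simp only [sub_mul]

theorem kc_grad {R : ℝ} (hR : 0 < R) {φ : E2 → ℝ} {dφ : Fin 2 → E2 → ℝ} (hφ : Nc φ)
    (hdφ : ∀ j, Nc (dφ j)) (hd : ∀ j x, HasLineDerivAt ℝ φ (dφ j x) x (e2 j)) (x : E2) :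
    ∑ j, kc R (dφ j) j x = 0 := by
  have := div1 hR hφ hdφ hd x
  unfold kc
  rw [← integral_finsetSum _ fun j _ => (kc_nc hR (hdφ j) j x).int]
  simpa only [mul_comm] using this

theorem kc_anti {R : ℝ} (hR : 0 < R) {f g : E2 → ℝ} (hf : Nc f) (hg : Nc g) (j : Fin 2) :
    ∫ x, kc R f j x * g x = - ∫ x, f x * kc R g j x := by
  have hInt2 : Integrable (Function.uncurry fun x y => f y * K R (x - y) j * g x)
      ((volume : Measure E2).prod volume) := by
    refine ((hg.int.mul_prod hf.int).norm.const_mul R⁻¹).mono' ?_ (ae_of_all _ fun p => ?_)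
    · refine Continuous.aestronglyMeasurable ?_
      exact ((hf.1.comp continuous_snd).mul ((K_cont hR j).comp (continuous_fst.sub continuous_snd))).mul
        (hg.1.comp continuous_fst)
    · simp only [Function.uncurry, norm_mul]
      calc ‖f p.2‖ * ‖K R (p.1 - p.2) j‖ * ‖g p.1‖ ≤ ‖f p.2‖ * R⁻¹ * ‖g p.1‖ := by
            gcongr; exact K_bound hR _ j
        _ = _ := by ring
  have h1 : ∀ x, kc R f j x * g x = ∫ y, f y * K R (x - y) j * g x := fun x => by
    rw [integral_mul_const]; rfl
  have h2 : ∀ y, f y * kc R g j y = - ∫ x, f y * K R (x - y) j * g x := fun y => by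
    rw [← integral_neg]
    unfold kc
    rw [← integral_const_mul]
    congr 1; ext x
    rw [K_odd' R y x]; ring
  simp_rw [h1, h2]
  rw [integral_neg, neg_neg]
  exact integral_integral_swap hInt2

theorem kc_div {R : ℝ} (hR : 0 < R) {f φ : E2 → ℝ} {dφ : Fin 2 → E2 → ℝ} (hf : Nc f) (hφ : Nc φ)
    (hdφ : ∀ j, Nc (dφ j)) (hd : ∀ j x, HasLineDerivAt ℝ φ (dφ j x) x (e2 j)) :
    ∑ j, ∫ x, kc R f j x * dφ j x = 0 := by
  simp_rw [kc_anti hR hf (hdφ _)]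
  rw [Finset.sum_neg_distrib, ← integral_finsetSum _ fun j _ => (hf.mulBc (kc_bc hR (hdφ j) j)).int]
  simp_rw [← Finset.mul_sum, kc_grad hR hφ hdφ hd]
  simp

/-! ### The potentials -/

/-- density -/
def rho (u : SchwartzMap E2 ℂ) (x : E2) : ℝ := ‖u x‖ ^ 2
/-- components of the magnetic potential -/
def AA (R : ℝ) (u : SchwartzMap E2 ℂ) (j : Fin 2) (x : E2) : ℝ := kc R (rho u) j x
/-- components of the current -/
def JJ (u : SchwartzMap E2 ℂ) (j : Fin 2) (x : E2) : ℝ := 2 * ((starRingEnd ℂ) (u x) * pd u j x).im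
def cur (β R : ℝ) (u : SchwartzMap E2 ℂ) (j : Fin 2) (x : E2) : ℝ :=
  2 * β * rho u x * AA R u j x + JJ u j x
def VV (β R : ℝ) (u : SchwartzMap E2 ℂ) (x : E2) : ℝ := ∑ j, kc R (cur β R u j) j x
def Pot (β R : ℝ) (u : SchwartzMap E2 ℂ) (x : E2) : ℝ :=
  β ^ 2 * ∑ j, AA R u j x ^ 2 - β * VV β R u x
/-- covariant derivative -/
def Dd (β R : ℝ) (u : SchwartzMap E2 ℂ) (j : Fin 2) (x : E2) : ℂ :=
  -Complex.I * pd u j x + ((β * AA R u j x : ℝ) : ℂ) * u x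
/-- the linear operator -/
def Lop (β : ℝ) (A : Fin 2 → E2 → ℝ) (Φ : E2 → ℝ) (φ : SchwartzMap E2 ℂ) (x : E2) : ℂ :=
  -(∑ j, pd (pd φ j) j x) - 2 * β * Complex.I * (∑ j, (A j x : ℂ) * pd φ j x) + (Φ x : ℂ) * φ x

theorem rho_nc (u : SchwartzMap E2 ℂ) : Nc (rho u) := (sch_nc u).sq
theorem AA_bc {R : ℝ} (hR : 0 < R) (u : SchwartzMap E2 ℂ) (j : Fin 2) : Bc (AA R u j) :=
  kc_bc hR (rho_nc u) j
theorem JJ_nc (u : SchwartzMap E2 ℂ) (j : Fin 2) : Nc (JJ u j) :=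
  (((sch_nc u).conj.mul (sch_nc (pd u j))).im).cmul 2
theorem cur_nc {β R : ℝ} (hR : 0 < R) (u : SchwartzMap E2 ℂ) (j : Fin 2) : Nc (cur β R u j) :=
  (((rho_nc u).cmul (2 * β)).mulBc (AA_bc hR u j)).add (JJ_nc u j)
theorem Bc.sum {ι : Type*} {s : Finset ι} {f : ι → E2 → ℝ} (h : ∀ i ∈ s, Bc (f i)) :
    Bc (fun x => ∑ i ∈ s, f i x) := by
  classical
  induction s using Finset.induction_on with
  | empty =>
    simp only [Finset.sum_empty]
    exact ⟨continuous_const, 0, by simp⟩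
  | insert a s ha ih =>
    simp only [Finset.sum_insert ha]
    exact (h a (by simp)).add (ih fun i hi => h i (by simp [hi]))
theorem VV_bc {β R : ℝ} (hR : 0 < R) (u : SchwartzMap E2 ℂ) : Bc (VV β R u) :=
  Bc.sum fun j _ => kc_bc hR (cur_nc hR u j) j
theorem Pot_bc {β R : ℝ} (hR : 0 < R) (u : SchwartzMap E2 ℂ) : Bc (Pot β R u) := by
  have h1 : Bc fun x => ∑ j, AA R u j x ^ 2 := Bc.sum fun j _ => by
    simpa only [pow_two] using (AA_bc hR u j).mul (AA_bc hR u j)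
  have := ((Bc.const (β ^ 2)).mul h1).add ((Bc.const (-β)).mul (VV_bc (β := β) hR u))
  have e : Pot β R u = fun x => β ^ 2 * (∑ j, AA R u j x ^ 2) + -β * VV β R u x := by
    funext x; simp only [Pot]; ring
  rw [e]; exact this
theorem Dd_nc {β R : ℝ} (hR : 0 < R) (u : SchwartzMap E2 ℂ) (j : Fin 2) : Nc (Dd β R u j) :=
  ((sch_nc (pd u j)).cmul _).add ((((Bc.const β).mul (AA_bc hR u j)).ofReal).mulNc (sch_nc u))
theorem Lop_nc {β : ℝ} {A : Fin 2 → E2 → ℝ} {Φ : E2 → ℝ} (hA : ∀ j, Bc (A j)) (hΦ : Bc Φ)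
    (φ : SchwartzMap E2 ℂ) : Nc (Lop β A Φ φ) :=
  ((Nc.sum fun j _ => sch_nc (pd (pd φ j) j)).neg.sub
    ((Nc.sum fun j _ => ((hA j).ofReal.mulNc (sch_nc (pd φ j)))).cmul _)).add
    (hΦ.ofReal.mulNc (sch_nc φ))

theorem Apot_eq {R : ℝ} (hR : 0 < R) (u : SchwartzMap E2 ℂ) (x : E2) (j : Fin 2) :
    Apot R u x j = AA R u j x := by
  unfold Apot convKs AA kc
  rw [eval_integral_piLp]
  · simp [rho]
  · intro i
    exact (kc_nc hR (rho_nc u) i x).int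

theorem convKv_eq {β R : ℝ} (hR : 0 < R) (u : SchwartzMap E2 ℂ) (x : E2) :
    convKv R (fun y => (2 * β * ‖u y‖ ^ 2) • Apot R u y + Jf u y) x = VV β R u x := by
  unfold convKv VV kc
  rw [← integral_finsetSum _ fun j _ => (kc_nc hR (cur_nc hR u j) j x).int]
  congr 1; ext y
  rw [PiLp.inner_apply]
  refine Finset.sum_congr rfl fun j _ => ?_
  have : Jf u y j = JJ u j y := rfl
  simp only [PiLp.add_apply, PiLp.smul_apply, smul_eq_mul, Apot_eq hR, this]
  rfl

theorem css_eq {β R : ℝ} (hR : 0 < R) (u : SchwartzMap E2 ℂ) (x : E2) :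
    cssRHS β R u x = Lop β (AA R u) (Pot β R u) u x := by
  unfold cssRHS Lop
  rw [convKv_eq hR, lap_eq, sch_fderiv_eq, EuclideanSpace.norm_sq_eq]
  simp only [Apot_eq hR, Pot, Real.norm_eq_abs, sq_abs]
  push_cast
  ring

theorem energy_eq {β R : ℝ} (hR : 0 < R) (u : SchwartzMap E2 ℂ) :
    energy β R u = ∑ j, n2 (Dd β R u j) ^ 2 := by
  unfold energy
  simp only [n2_sq]
  rw [← integral_finsetSum _ fun j _ => (Dd_nc hR u j).sq.int]
  simp only [Apot_eq hR]
  rfl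


/-! ### product rules -/

theorem line_re (f g : SchwartzMap E2 ℂ) (j : Fin 2) (x : E2) :
    HasLineDerivAt ℝ (fun x => ((starRingEnd ℂ) (f x) * g x).re)
      ((starRingEnd ℂ) (pd f j x) * g x + (starRingEnd ℂ) (f x) * pd g j x).re x (e2 j) := by
  have hf := hasLine f j x
  have hg := hasLine g j x
  have h := (hf.re'.mul' hg.re').add' (hf.im'.mul' hg.im')
  have e : (fun x => ((starRingEnd ℂ) (f x) * g x).re) =
      fun x => (f x).re * (g x).re + (f x).im * (g x).im := by
    funext x; simp [Complex.mul_re]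
  rw [e]
  refine HasDerivAt.congr_deriv h ?_
  simp [Complex.mul_re]; ring

theorem line_im (f g : SchwartzMap E2 ℂ) (j : Fin 2) (x : E2) :
    HasLineDerivAt ℝ (fun x => ((starRingEnd ℂ) (f x) * g x).im)
      ((starRingEnd ℂ) (pd f j x) * g x + (starRingEnd ℂ) (f x) * pd g j x).im x (e2 j) := by
  have hf := hasLine f j x
  have hg := hasLine g j x
  have h := (hf.re'.mul' hg.im').sub' (hf.im'.mul' hg.re')
  have e : (fun x => ((starRingEnd ℂ) (f x) * g x).im) =
      fun x => (f x).re * (g x).im - (f x).im * (g x).re := by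
    funext x; simp [Complex.mul_im]; ring
  rw [e]
  refine HasDerivAt.congr_deriv h ?_
  simp [Complex.mul_im]; ring

theorem cm_nc {f g : E2 → ℂ} (hf : Nc f) (hg : Nc g) : Nc fun x => (starRingEnd ℂ) (f x) * g x :=
  hf.conj.mul hg

theorem line_rho (u : SchwartzMap E2 ℂ) (j : Fin 2) (x : E2) :
    HasLineDerivAt ℝ (rho u) (2 * ((starRingEnd ℂ) (u x) * pd u j x).re) x (e2 j) := by
  have h := line_re u u j x
  have e : (fun x => ((starRingEnd ℂ) (u x) * u x).re) = rho u := by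
    funext x; rw [Complex.conj_mul']; simp [rho, ← Complex.ofReal_pow]
  rw [e] at h
  refine HasDerivAt.congr_deriv h ?_
  simp [Complex.mul_re]; ring

theorem int_deriv_zero {φ φ' : E2 → ℝ} {v : E2} (hφ : Nc φ) (hφ' : Nc φ')
    (h2 : ∀ x, HasLineDerivAt ℝ φ (φ' x) x v) : ∫ x, φ' x = 0 := by
  have := ibp (f := fun _ => 1) (f' := fun _ => 0) (v := v) (Bc.const 1) (Bc.const 0) hφ hφ'
    (fun x => hasDerivAt_const _ _) h2
  simpa using this

/-! ### bounds -/

/-- `H¹` bounds -/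
def Hb (m G : ℝ) (u : SchwartzMap E2 ℂ) : Prop := n2 u ≤ m ∧ ∀ j, n2 (pd u j) ≤ G

theorem Hb.m0 {m G : ℝ} {u : SchwartzMap E2 ℂ} (h : Hb m G u) : 0 ≤ m := (n2_nonneg _).trans h.1
theorem Hb.G0 {m G : ℝ} {u : SchwartzMap E2 ℂ} (h : Hb m G u) : 0 ≤ G := (n2_nonneg _).trans (h.2 0)

theorem int_abs_le {F H : Type*} [NormedAddCommGroup F] [NormedAddCommGroup H]
    {f : E2 → F} {g : E2 → H} {h : E2 → ℝ} {C : ℝ} (hC : 0 ≤ C) (hf : Nc f) (hg : Nc g)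
    (hh : ∀ x, |h x| ≤ C * (‖f x‖ * ‖g x‖)) : ∫ x, |h x| ≤ C * (n2 f * n2 g) :=
  (le_abs_self _).trans (abs_int_le hC hf hg fun x => by rw [abs_abs]; exact hh x)

theorem A_bd {R m G : ℝ} (hR : 0 < R) {u : SchwartzMap E2 ℂ} (hu : Hb m G u) (j : Fin 2) (x : E2) :
    |AA R u j x| ≤ R⁻¹ * m ^ 2 := by
  refine (kc_bound hR (rho_nc u) j x).trans ?_
  have h1 : ∫ y, |rho u y| = n2 u ^ 2 := by
    rw [n2_sq]; congr 1; ext y; exact abs_of_nonneg (by unfold rho; positivity)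
  rw [h1]
  have := n2_nonneg u
  have := hu.1
  gcongr

theorem rho_diff {m G : ℝ} {u u' : SchwartzMap E2 ℂ} (hu : Hb m G u) (hu' : Hb m G u') :
    ∫ x, |rho u' x - rho u x| ≤ 2 * m * n2 (u' - u : SchwartzMap E2 ℂ) := by
  have hnc := (sch_nc u').norm.add (sch_nc u).norm
  have := int_abs_le (h := fun x => rho u' x - rho u x) (zero_le_one) hnc (sch_nc (u' - u)) (fun x => by
    simp only [rho, sub_apply]
    have h1 : ‖u' x‖ ^ 2 - ‖u x‖ ^ 2 = (‖u' x‖ + ‖u x‖) * (‖u' x‖ - ‖u x‖) := by ring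
    rw [h1, abs_mul, one_mul, Real.norm_eq_abs]
    exact mul_le_mul_of_nonneg_left (abs_norm_sub_norm_le _ _) (abs_nonneg _))
  refine this.trans ?_
  have h2 := n2_add (sch_nc u').norm (sch_nc u).norm
  rw [n2_norm, n2_norm] at h2
  have h3 := hu.1
  have h4 := hu'.1
  rw [one_mul]
  exact mul_le_mul_of_nonneg_right (by linarith) (n2_nonneg _)

theorem a_bd {R m G : ℝ} (hR : 0 < R) {u u' : SchwartzMap E2 ℂ} (hu : Hb m G u) (hu' : Hb m G u')
    (j : Fin 2) (x : E2) :
    |AA R u' j x - AA R u j x| ≤ R⁻¹ * (2 * m * n2 (u' - u : SchwartzMap E2 ℂ)) := by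
  unfold AA
  rw [← kc_sub hR (rho_nc u') (rho_nc u)]
  refine (kc_bound hR ((rho_nc u').sub (rho_nc u)) j x).trans ?_
  have := rho_diff hu hu'
  gcongr

theorem JJ_bd {m G : ℝ} {u : SchwartzMap E2 ℂ} (hu : Hb m G u) (j : Fin 2) :
    ∫ x, |JJ u j x| ≤ 2 * (m * G) := by
  have := int_abs_le (h := JJ u j) (zero_le_two) (sch_nc u) (sch_nc (pd u j)) (fun x => by
    unfold JJ
    rw [abs_mul, abs_two]
    gcongr
    refine (Complex.abs_im_le_norm _).trans ?_
    simp)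
  refine this.trans ?_
  have := mul_le_mul hu.1 (hu.2 j) (n2_nonneg _) hu.m0
  linarith

theorem rho_int {m G : ℝ} {u : SchwartzMap E2 ℂ} (hu : Hb m G u) : ∫ x, rho u x ≤ m ^ 2 := by
  have : ∫ x, rho u x = n2 u ^ 2 := (n2_sq _).symm
  rw [this]
  exact pow_le_pow_left₀ (n2_nonneg _) hu.1 2

theorem int_abs_add_le {f g : E2 → ℝ} (hf : Nc f) (hg : Nc g) :
    ∫ x, |f x + g x| ≤ (∫ x, |f x|) + ∫ x, |g x| := by
  have e : (∫ x, (|f x| + |g x|)) = (∫ x, |f x|) + ∫ x, |g x| := integral_add hf.norm.int hg.norm.int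
  rw [← e]
  exact integral_mono (hf.add hg).norm.int (hf.norm.int.add hg.norm.int) fun x => abs_add_le _ _

theorem int_mul_bd {f g : E2 → ℝ} {C D : ℝ} (hf : Nc f) (hg : ∀ x, |g x| ≤ C)
    (hD : ∫ x, |f x| ≤ D) : ∫ x, |f x * g x| ≤ C * D := by
  have hC : 0 ≤ C := (abs_nonneg _).trans (hg 0)
  calc ∫ x, |f x * g x| ≤ ∫ x, C * |f x| := by
        refine integral_mono_of_nonneg (ae_of_all _ fun x => abs_nonneg _) (hf.norm.int.const_mul C)
          (ae_of_all _ fun x => ?_)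
        simp only [abs_mul]
        rw [mul_comm]
        exact mul_le_mul_of_nonneg_right (hg x) (abs_nonneg _)
    _ = C * ∫ x, |f x| := integral_const_mul _ _
    _ ≤ _ := by gcongr

theorem V_bd {R : ℝ} (hR : 0 < R) (β m G : ℝ) : ∃ C, 0 ≤ C ∧ ∀ u, Hb m G u → ∀ x, |VV β R u x| ≤ C := by
  refine ⟨|2 * (R⁻¹ * (|2 * β| * ((R⁻¹ * m ^ 2) * m ^ 2) + 2 * (m * G)))|, abs_nonneg _, fun u hu x => ?_⟩
  refine le_trans ?_ (le_abs_self _)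
  have h1 : ∀ j, |kc R (cur β R u j) j x| ≤ R⁻¹ * (|2 * β| * ((R⁻¹ * m ^ 2) * m ^ 2) + 2 * (m * G)) := fun j => by
    refine (kc_bound hR (cur_nc hR u j) j x).trans ?_
    gcongr
    refine (int_abs_add_le (((rho_nc u).cmul (2 * β)).mulBc (AA_bc hR u j)) (JJ_nc u j)).trans ?_
    refine add_le_add ?_ (JJ_bd hu j)
    have h2 : ∀ y, |2 * β * rho u y * AA R u j y| = |2 * β| * |rho u y * AA R u j y| := fun y => by
      rw [mul_assoc (2 * β), abs_mul]
    simp_rw [h2]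
    rw [integral_const_mul]
    gcongr
    refine int_mul_bd (rho_nc u) (fun x => A_bd hR hu j x) ?_
    have h3 : ∫ y, |rho u y| = ∫ y, rho u y := by
      congr 1; ext y; exact abs_of_nonneg (by unfold rho; positivity)
    rw [h3]; exact rho_int hu
  unfold VV
  refine (Finset.abs_sum_le_sum_abs _ _).trans ?_
  rw [Fin.sum_univ_two]
  linarith [h1 0, h1 1]

/-! ### energy comparison -/

theorem alg_cmp (β A A' : ℝ) (u du d2u w dw : ℂ) :
    ‖-Complex.I * du + ((β * A : ℝ) : ℂ) * u‖ ^ 2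
      + 2 * ((starRingEnd ℂ) dw * du + (starRingEnd ℂ) w * d2u).re
      + 2 * β * (A * ((starRingEnd ℂ) du * w + (starRingEnd ℂ) u * dw).im)
      + 2 * ((starRingEnd ℂ) w * (-d2u - 2 * β * Complex.I * (A * du) + ((β ^ 2 * A ^ 2 : ℝ) : ℂ) * u)).re
      + β * ((A' - A) * (2 * β * ‖u‖ ^ 2 * A + 2 * ((starRingEnd ℂ) u * du).im))
      + 2 * β * ((A' - A) * ((starRingEnd ℂ) (-Complex.I * du + ((β * A : ℝ) : ℂ) * u) * w).re)
      ≤ ‖-Complex.I * (du + dw) + ((β * A' : ℝ) : ℂ) * (u + w)‖ ^ 2 := by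
  rw [← sub_nonneg]
  have : 0 ≤ ‖-Complex.I * dw + ((β * A : ℝ) : ℂ) * w + ((β * (A' - A) : ℝ) : ℂ) * (u + w)‖ ^ 2 := by positivity
  refine this.trans_eq ?_
  simp only [Complex.sq_norm, Complex.normSq_apply]
  simp [pow_two]
  ring

theorem int_comb7 {f0 f1 f2 f3 f4 f5 f6 : E2 → ℝ} (h0 : Integrable f0) (h1 : Integrable f1)
    (h2 : Integrable f2) (h3 : Integrable f3) (h4 : Integrable f4) (h5 : Integrable f5) (h6 : Integrable f6) :
    ∫ x, (f0 x + f1 x + f2 x + f3 x + f4 x + f5 x + f6 x) =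
      (∫ x, f0 x) + (∫ x, f1 x) + (∫ x, f2 x) + (∫ x, f3 x) + (∫ x, f4 x) + (∫ x, f5 x) + ∫ x, f6 x := by
  have a1 := h0.add h1
  have a2 := a1.add h2
  have a3 := a2.add h3
  have a4 := a3.add h4
  have a5 := a4.add h5
  have e1 := integral_add h0 h1
  have e2 := integral_add a1 h2
  have e3 := integral_add a2 h3
  have e4 := integral_add a3 h4
  have e5 := integral_add a4 h5
  have e6 := integral_add a5 h6
  simp only [Pi.add_apply] at e1 e2 e3 e4 e5 e6
  rw [e6, e5, e4, e3, e2, e1]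

theorem energy_cmp {R : ℝ} (hR : 0 < R) (β m G : ℝ) : ∃ C, 0 ≤ C ∧ ∀ u u', Hb m G u → Hb m G u' →
    2 * (∫ x, ((starRingEnd ℂ) ((u' - u : SchwartzMap E2 ℂ) x) * cssRHS β R u x).re)
      - C * n2 (u' - u : SchwartzMap E2 ℂ) ^ 2 ≤ energy β R u' - energy β R u := by
  obtain ⟨CV, hCV, hV⟩ := V_bd hR β m G
  refine ⟨|β| * CV + |2 * β| * (2 * (R⁻¹ * (2 * |m|) * (|G| + |β| * (R⁻¹ * m ^ 2) * |m|))),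
    by positivity, fun u u' hu hu' => ?_⟩
  set w : SchwartzMap E2 ℂ := u' - u with hw
  have hnw := sch_nc w
  have hnu := sch_nc u
  -- names of the pieces
  set P : Fin 2 → E2 → ℝ := fun j x =>
    ((starRingEnd ℂ) (pd w j x) * pd u j x + (starRingEnd ℂ) (w x) * pd (pd u j) j x).re with hP
  set Q : Fin 2 → E2 → ℝ := fun j x =>
    ((starRingEnd ℂ) (pd u j x) * w x + (starRingEnd ℂ) (u x) * pd w j x).im with hQ
  have hPn : ∀ j, Nc (P j) := fun j =>
    ((cm_nc (sch_nc (pd w j)) (sch_nc (pd u j))).add (cm_nc hnw (sch_nc (pd (pd u j) j)))).re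
  have hQn : ∀ j, Nc (Q j) := fun j =>
    ((cm_nc (sch_nc (pd u j)) hnw).add (cm_nc hnu (sch_nc (pd w j)))).im
  have hP0 : ∀ j, ∫ x, P j x = 0 := fun j =>
    int_deriv_zero (cm_nc hnw (sch_nc (pd u j))).re (hPn j) (line_re w (pd u j) j)
  have hQ0 : ∑ j, ∫ x, AA R u j x * Q j x = 0 :=
    kc_div hR (rho_nc u) (cm_nc hnu hnw).im hQn (line_im u w)
  set a : Fin 2 → E2 → ℝ := fun j x => AA R u' j x - AA R u j x with ha
  have haB : ∀ j, Bc (a j) := fun j => by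
    have := (AA_bc hR u' j).add ((Bc.const (-1)).mul (AA_bc hR u j))
    simpa [ha, sub_eq_add_neg] using this
  have hanti : ∀ j, ∫ x, a j x * cur β R u j x = - ∫ x, (rho u' x - rho u x) * kc R (cur β R u j) j x := fun j => by
    rw [← kc_anti hR ((rho_nc u').sub (rho_nc u)) (cur_nc hR u j)]
    congr 1; ext x
    rw [kc_sub hR (rho_nc u') (rho_nc u)]; rfl
  have hVB := VV_bc (β := β) hR u
  have hanti2 : ∑ j, ∫ x, a j x * cur β R u j x = - ∫ x, (rho u' x - rho u x) * VV β R u x := by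
    simp_rw [hanti]
    rw [Finset.sum_neg_distrib, ← integral_finsetSum _ fun j _ =>
      (((rho_nc u').sub (rho_nc u)).mulBc (kc_bc hR (cur_nc hR u j) j)).int]
    simp_rw [← Finset.mul_sum]; rfl
  set S : Fin 2 → E2 → ℝ := fun j x => a j x * ((starRingEnd ℂ) (Dd β R u j x) * w x).re with hS
  have hSn : ∀ j, Nc (S j) := fun j => (haB j).mulNc (cm_nc (Dd_nc hR u j) hnw).re
  have hSb : ∀ j, |∫ x, S j x| ≤ R⁻¹ * (2 * |m|) * (|G| + |β| * (R⁻¹ * m ^ 2) * |m|) * n2 w ^ 2 := fun j => by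
    have h1 := abs_int_le (h := S j) (f := Dd β R u j) (g := w) (C := R⁻¹ * (2 * m * n2 w))
      (by have := hu.m0; have := n2_nonneg w; positivity) (Dd_nc hR u j) hnw (fun x => by
        simp only [hS]
        rw [abs_mul]
        refine mul_le_mul (a_bd hR hu hu' j x) ?_ (abs_nonneg _)
          (by have := hu.m0; have := n2_nonneg w; positivity)
        refine (Complex.abs_re_le_norm _).trans ?_
        simp)
    have h2 : n2 (Dd β R u j) ≤ G + |β| * (R⁻¹ * m ^ 2) * m := by
      refine (n2_add ((sch_nc (pd u j)).cmul _)
        ((((Bc.const β).mul (AA_bc hR u j)).ofReal).mulNc (sch_nc u))).trans ?_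
      refine add_le_add ?_ ?_
      · refine (n2_le zero_le_one (sch_nc (pd u j)) fun x => ?_).trans (by rw [one_mul]; exact hu.2 j)
        simp
      · have hc : 0 ≤ |β| * (R⁻¹ * m ^ 2) := by positivity
        refine (n2_le hc (sch_nc u) fun x => ?_).trans (mul_le_mul_of_nonneg_left hu.1 hc)
        rw [norm_mul, Complex.norm_real, Real.norm_eq_abs, abs_mul]
        gcongr
        exact A_bd hR hu j x
    rw [abs_of_nonneg hu.m0, abs_of_nonneg hu.G0]
    refine h1.trans ?_
    have h3 := n2_nonneg w
    have h4 := hu.m0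
    calc R⁻¹ * (2 * m * n2 w) * (n2 (Dd β R u j) * n2 w)
        ≤ R⁻¹ * (2 * m * n2 w) * ((G + |β| * (R⁻¹ * m ^ 2) * m) * n2 w) := by gcongr
      _ = _ := by ring
  -- pointwise inequality
  set ell : E2 → ℝ := fun x => ((starRingEnd ℂ) (w x) * cssRHS β R u x).re with hell
  have hellN : Nc ell := by
    have : ell = fun x => ((starRingEnd ℂ) (w x) * Lop β (AA R u) (Pot β R u) u x).re := by
      funext x; simp only [hell, css_eq hR]
    rw [this]
    exact (cm_nc hnw (Lop_nc (AA_bc hR u) (Pot_bc hR u) u)).re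
  set vr : E2 → ℝ := fun x => VV β R u x * ((starRingEnd ℂ) (w x) * u x).re with hvr
  have hvrN : Nc vr := hVB.mulNc (cm_nc hnw hnu).re
  have hpt : ∀ x, (∑ j, ‖Dd β R u j x‖ ^ 2) + 2 * (∑ j, P j x) + 2 * β * (∑ j, AA R u j x * Q j x)
      + 2 * ell x + 2 * β * vr x + β * (∑ j, a j x * cur β R u j x) + 2 * β * (∑ j, S j x)
      ≤ ∑ j, ‖Dd β R u' j x‖ ^ 2 := fun x => by
    have e0 : u' x = u x + w x := by simp [hw]
    have e1 : ∀ j, pd u' j x = pd u j x + pd w j x := fun j => by simp [hw, pd_sub]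
    have h : ∀ j, _ := fun j => alg_cmp β (AA R u j x) (AA R u' j x) (u x) (pd u j x)
      (pd (pd u j) j x) (w x) (pd w j x)
    simp_rw [← e1, ← e0] at h
    have hs := Finset.sum_le_sum (s := Finset.univ) fun j _ => h j
    refine le_trans (le_of_eq ?_) hs
    simp only [Fin.sum_univ_two, hell, css_eq hR, Lop, Pot, hP, hQ, hS, hvr, ha, cur, JJ, rho, Dd]
    simp only [Complex.add_re, Complex.sub_re, Complex.mul_re, Complex.neg_re, Complex.add_im,
      Complex.sub_im, Complex.mul_im, Complex.neg_im, Complex.ofReal_re, Complex.ofReal_im,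
      Complex.conj_re, Complex.conj_im, Complex.I_re, Complex.I_im, Complex.re_ofNat, Complex.im_ofNat,
      Complex.ofReal_add, Complex.ofReal_sub, Complex.ofReal_mul, Complex.ofReal_pow]
    simp only [← Complex.ofReal_pow, Complex.ofReal_re, Complex.ofReal_im]
    ring
  have i1 : Integrable fun x => ∑ j, ‖Dd β R u j x‖ ^ 2 := (Nc.sum fun j _ => (Dd_nc hR u j).sq).int
  have i1' : Integrable fun x => ∑ j, ‖Dd β R u' j x‖ ^ 2 := (Nc.sum fun j _ => (Dd_nc hR u' j).sq).int
  have i2 : Integrable fun x => ∑ j, P j x := (Nc.sum fun j _ => hPn j).int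
  have i3 : Integrable fun x => ∑ j, AA R u j x * Q j x := (Nc.sum fun j _ => (AA_bc hR u j).mulNc (hQn j)).int
  have i6 : Integrable fun x => ∑ j, a j x * cur β R u j x :=
    (Nc.sum fun j _ => (haB j).mulNc (cur_nc hR u j)).int
  have i7 : Integrable fun x => ∑ j, S j x := (Nc.sum fun j _ => hSn j).int
  have hI := integral_mono ((((((i1.add (i2.const_mul 2)).add (i3.const_mul (2 * β))).add
    (hellN.int.const_mul 2)).add (hvrN.int.const_mul (2 * β))).add (i6.const_mul β)).add (i7.const_mul (2 * β)))
    i1' hpt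
  have hI2 := (int_comb7 i1 (i2.const_mul 2) (i3.const_mul (2 * β)) (hellN.int.const_mul 2)
    (hvrN.int.const_mul (2 * β)) (i6.const_mul β) (i7.const_mul (2 * β))).symm.trans_le hI
  clear hI
  rename' hI2 => hI
  simp only [integral_const_mul] at hI
  rw [integral_finsetSum _ fun j _ => (hPn j).int, integral_finsetSum _ fun j _ => ((AA_bc hR u j).mulNc (hQn j)).int,
    hQ0, integral_finsetSum _ fun j _ => ((haB j).mulNc (cur_nc hR u j)).int, hanti2,
    integral_finsetSum _ fun j _ => (hSn j).int, integral_finsetSum _ fun j _ => (Dd_nc hR u j).sq.int,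
    integral_finsetSum _ fun j _ => (Dd_nc hR u' j).sq.int] at hI
  simp only [hP0, Finset.sum_const_zero, mul_zero, add_zero] at hI
  have hr : ∫ x, (rho u' x - rho u x) * VV β R u x = 2 * (∫ x, vr x) + ∫ x, ‖w x‖ ^ 2 * VV β R u x := by
    rw [← integral_const_mul, ← integral_add (hvrN.int.const_mul 2) (hnw.sq.mulBc hVB).int]
    congr 1; ext x
    have e0 : u' x = u x + w x := by simp [hw]
    simp only [rho, e0, hvr, Complex.sq_norm, Complex.normSq_apply]
    simp; ring
  have hVw : |∫ x, ‖w x‖ ^ 2 * VV β R u x| ≤ CV * n2 w ^ 2 := by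
    have := abs_int_le (h := fun x => ‖w x‖ ^ 2 * VV β R u x) hCV hnw hnw (fun x => by
      rw [abs_mul, abs_of_nonneg (by positivity), mul_comm, ← pow_two]
      exact mul_le_mul_of_nonneg_right (hV u hu x) (by positivity))
    rwa [← pow_two] at this
  rw [energy_eq hR, energy_eq hR]
  simp only [n2_sq (Dd β R u _), n2_sq (Dd β R u' _)]
  rw [hr] at hI
  simp only [Fin.sum_univ_two] at hI ⊢
  have b1 := abs_le.1 (show |β * ∫ x, ‖w x‖ ^ 2 * VV β R u x| ≤ |β| * (CV * n2 w ^ 2) by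
    rw [abs_mul]; gcongr)
  have b2 : |2 * β * ((∫ x, S 0 x) + ∫ x, S 1 x)| ≤
      |2 * β| * (2 * (R⁻¹ * (2 * |m|) * (|G| + |β| * (R⁻¹ * m ^ 2) * |m|) * n2 w ^ 2)) := by
    rw [abs_mul]
    gcongr
    refine (abs_add_le _ _).trans ?_
    linarith [hSb 0, hSb 1]
  have b2 := abs_le.1 b2
  have : (|β| * CV + |2 * β| * (2 * (R⁻¹ * (2 * |m|) * (|G| + |β| * (R⁻¹ * m ^ 2) * |m|)))) * n2 w ^ 2
    = |β| * (CV * n2 w ^ 2) + |2 * β| * (2 * (R⁻¹ * (2 * |m|) * (|G| + |β| * (R⁻¹ * m ^ 2) * |m|) * n2 w ^ 2)) := by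
    ring
  rw [this]
  linarith [b1.2, b2.1]


/-! ### differences of potentials -/

theorem abs_im_conj_mul_le (z w : ℂ) : |((starRingEnd ℂ) z * w).im| ≤ ‖z‖ * ‖w‖ := by
  refine (Complex.abs_im_le_norm _).trans ?_
  simp
theorem abs_re_conj_mul_le (z w : ℂ) : |((starRingEnd ℂ) z * w).re| ≤ ‖z‖ * ‖w‖ := by
  refine (Complex.abs_re_le_norm _).trans ?_
  simp

theorem V_diff {R : ℝ} (hR : 0 < R) (β m G : ℝ) : ∃ C, 0 ≤ C ∧ ∀ u u', Hb m G u → Hb m G u' →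
    ∀ x, |VV β R u' x - VV β R u x| ≤ C * n2 (u' - u : SchwartzMap E2 ℂ) := by
  refine ⟨2 * (R⁻¹ * (|2 * β| * (R⁻¹ * (2 * |m|) * m ^ 2) + |2 * β| * (R⁻¹ * m ^ 2 * (2 * |m|))
    + 2 * |G| + 2 * |G|)), by positivity, fun u u' hu hu' x => ?_⟩
  set w : SchwartzMap E2 ℂ := u' - u with hw
  have hm := hu.m0
  have hG := hu.G0
  rw [abs_of_nonneg hm, abs_of_nonneg hG]
  have hW := n2_nonneg w
  set a : Fin 2 → E2 → ℝ := fun j x => AA R u' j x - AA R u j x with ha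
  have haB : ∀ j, Bc (a j) := fun j => by
    have := (AA_bc hR u' j).add ((Bc.const (-1)).mul (AA_bc hR u j))
    simpa [ha, sub_eq_add_neg] using this
  set Q : Fin 2 → E2 → ℝ := fun j x =>
    ((starRingEnd ℂ) (pd u j x) * w x + (starRingEnd ℂ) (u x) * pd w j x).im with hQ
  have hQn : ∀ j, Nc (Q j) := fun j =>
    ((cm_nc (sch_nc (pd u j)) (sch_nc w)).add (cm_nc (sch_nc u) (sch_nc (pd w j)))).im
  have hQ0 : ∑ j, kc R (Q j) j x = 0 :=
    kc_grad hR (cm_nc (sch_nc u) (sch_nc w)).im hQn (line_im u w) x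
  set h1 : Fin 2 → E2 → ℝ := fun j x => 2 * β * (rho u' x * a j x) with hh1
  set h2 : Fin 2 → E2 → ℝ := fun j x => 2 * β * ((rho u' x - rho u x) * AA R u j x) with hh2
  set h3 : Fin 2 → E2 → ℝ := fun j x => 2 * ((starRingEnd ℂ) (w x) * pd u' j x).im with hh3
  set h4 : Fin 2 → E2 → ℝ := fun j x => -2 * ((starRingEnd ℂ) (pd u j x) * w x).im with hh4
  have n1 : ∀ j, Nc (h1 j) := fun j => ((rho_nc u').mulBc (haB j)).cmul _
  have n2' : ∀ j, Nc (h2 j) := fun j => (((rho_nc u').sub (rho_nc u)).mulBc (AA_bc hR u j)).cmul _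
  have n3 : ∀ j, Nc (h3 j) := fun j => ((cm_nc (sch_nc w) (sch_nc (pd u' j))).im).cmul _
  have n4 : ∀ j, Nc (h4 j) := fun j => ((cm_nc (sch_nc (pd u j)) (sch_nc w)).im).cmul _
  have n12 : ∀ j, Nc fun x => h1 j x + h2 j x := fun j => (n1 j).add (n2' j)
  have n123 : ∀ j, Nc fun x => h1 j x + h2 j x + h3 j x := fun j => (n12 j).add (n3 j)
  have nh : ∀ j, Nc fun x => h1 j x + h2 j x + h3 j x + h4 j x := fun j => (n123 j).add (n4 j)
  have hdec : ∀ j, (fun y => cur β R u' j y - cur β R u j y) =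
      fun y => (h1 j y + h2 j y + h3 j y + h4 j y) + (Q j y + Q j y) := fun j => by
    funext y
    have e0 : u' y = u y + w y := by simp [hw]
    have e1 : pd u' j y = pd u j y + pd w j y := by simp [hw, pd_sub]
    simp only [cur, JJ, hh1, hh2, hh3, hh4, hQ, ha, e0, e1]
    simp
    ring
  have hV : VV β R u' x - VV β R u x = ∑ j, kc R (fun y => h1 j y + h2 j y + h3 j y + h4 j y) j x := by
    unfold VV
    rw [← Finset.sum_sub_distrib]
    simp_rw [← kc_sub hR (cur_nc hR u' _) (cur_nc hR u _), hdec]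
    simp_rw [kc_add hR (nh _) ((hQn _).add (hQn _)), kc_add hR (hQn _) (hQn _)]
    rw [Finset.sum_add_distrib, Finset.sum_add_distrib, hQ0]
    simp
  have hb : ∀ j, |kc R (fun y => h1 j y + h2 j y + h3 j y + h4 j y) j x| ≤
      R⁻¹ * (|2 * β| * (R⁻¹ * (2 * m) * m ^ 2) + |2 * β| * (R⁻¹ * m ^ 2 * (2 * m))
    + 2 * G + 2 * G) * n2 w := fun j => by
    refine (kc_bound hR (nh j) j x).trans ?_
    rw [mul_assoc]
    gcongr
    have b1 : ∫ y, |h1 j y| ≤ |2 * β| * (R⁻¹ * (2 * m * n2 w) * m ^ 2) := by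
      simp only [hh1, abs_mul (2 * β)]
      rw [integral_const_mul]
      gcongr
      refine int_mul_bd (rho_nc u') (fun y => a_bd hR hu hu' j y) ?_
      have h3 : ∫ y, |rho u' y| = ∫ y, rho u' y := by
        congr 1; ext y; exact abs_of_nonneg (by unfold rho; positivity)
      rw [h3]; exact rho_int hu'
    have b2 : ∫ y, |h2 j y| ≤ |2 * β| * (R⁻¹ * m ^ 2 * (2 * m * n2 w)) := by
      simp only [hh2, abs_mul (2 * β)]
      rw [integral_const_mul]
      gcongr
      exact int_mul_bd ((rho_nc u').sub (rho_nc u)) (fun y => A_bd hR hu j y) (rho_diff hu hu')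
    have b3 : ∫ y, |h3 j y| ≤ 2 * (n2 w * G) := by
      refine (int_abs_le zero_le_two (sch_nc w) (sch_nc (pd u' j)) fun y => ?_).trans ?_
      · simp only [hh3]; rw [abs_mul, abs_two]
        gcongr; exact abs_im_conj_mul_le _ _
      · gcongr; exact hu'.2 j
    have b4 : ∫ y, |h4 j y| ≤ 2 * (G * n2 w) := by
      refine (int_abs_le zero_le_two (sch_nc (pd u j)) (sch_nc w) fun y => ?_).trans ?_
      · simp only [hh4]; rw [abs_mul, abs_neg, abs_two]
        gcongr; exact abs_im_conj_mul_le _ _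
      · gcongr; exact hu.2 j
    have c1 := int_abs_add_le (n123 j) (n4 j)
    have c2 := int_abs_add_le (n12 j) (n3 j)
    have c3 := int_abs_add_le (n1 j) (n2' j)
    calc _ ≤ |2 * β| * (R⁻¹ * (2 * m * n2 w) * m ^ 2) + |2 * β| * (R⁻¹ * m ^ 2 * (2 * m * n2 w))
          + 2 * (n2 w * G) + 2 * (G * n2 w) := by linarith
      _ = _ := by ring
  rw [hV]
  refine (Finset.abs_sum_le_sum_abs _ _).trans ?_
  rw [Fin.sum_univ_two]
  refine (add_le_add (hb 0) (hb 1)).trans (le_of_eq ?_)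
  ring

theorem Pot_bd {R : ℝ} (hR : 0 < R) (β m G : ℝ) : ∃ C, 0 ≤ C ∧ ∀ u, Hb m G u → ∀ x, |Pot β R u x| ≤ C := by
  obtain ⟨CV, hCV, hV⟩ := V_bd hR β m G
  refine ⟨β ^ 2 * (2 * (R⁻¹ * m ^ 2) ^ 2) + |β| * CV, by positivity, fun u hu x => ?_⟩
  unfold Pot
  refine (abs_sub _ _).trans ?_
  rw [abs_mul, abs_mul, abs_of_nonneg (sq_nonneg β)]
  have h : ∀ j, AA R u j x ^ 2 ≤ (R⁻¹ * m ^ 2) ^ 2 := fun j =>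
    sq_le_sq' (abs_le.1 (A_bd hR hu j x)).1 (abs_le.1 (A_bd hR hu j x)).2
  rw [Fin.sum_univ_two, abs_of_nonneg (by positivity)]
  gcongr
  · linarith [h 0, h 1]
  · exact hV u hu x

theorem Pot_diff {R : ℝ} (hR : 0 < R) (β m G : ℝ) : ∃ C, 0 ≤ C ∧ ∀ u u', Hb m G u → Hb m G u' →
    ∀ x, |Pot β R u' x - Pot β R u x| ≤ C * n2 (u' - u : SchwartzMap E2 ℂ) := by
  obtain ⟨CV, hCV, hV⟩ := V_diff hR β m G
  refine ⟨β ^ 2 * (2 * (R⁻¹ * (2 * |m|) * (2 * (R⁻¹ * m ^ 2)))) + |β| * CV, by positivity,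
    fun u u' hu hu' x => ?_⟩
  have hm := hu.m0
  rw [abs_of_nonneg hm]
  have hW := n2_nonneg (u' - u : SchwartzMap E2 ℂ)
  have e : Pot β R u' x - Pot β R u x = β ^ 2 * (∑ j, (AA R u' j x - AA R u j x) * (AA R u' j x + AA R u j x))
      - β * (VV β R u' x - VV β R u x) := by
    simp only [Pot, Fin.sum_univ_two]; ring
  rw [e]
  refine (abs_sub _ _).trans ?_
  rw [abs_mul, abs_mul, abs_of_nonneg (sq_nonneg β), add_mul]
  have h : ∀ j, |(AA R u' j x - AA R u j x) * (AA R u' j x + AA R u j x)| ≤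
      R⁻¹ * (2 * m * n2 (u' - u : SchwartzMap E2 ℂ)) * (2 * (R⁻¹ * m ^ 2)) := fun j => by
    rw [abs_mul]
    refine mul_le_mul (a_bd hR hu hu' j x) ?_ (abs_nonneg _) (by positivity)
    refine (abs_add_le _ _).trans ?_
    linarith [A_bd hR hu j x, A_bd hR hu' j x]
  refine add_le_add ?_ ?_
  · rw [mul_assoc]
    gcongr
    refine (Finset.abs_sum_le_sum_abs _ _).trans ?_
    rw [Fin.sum_univ_two]
    refine (add_le_add (h 0) (h 1)).trans (le_of_eq ?_)
    ring
  · rw [mul_assoc]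
    gcongr
    exact hV u u' hu hu' x

theorem Lop_sub (β : ℝ) (A : Fin 2 → E2 → ℝ) (Φ : E2 → ℝ) (f g : SchwartzMap E2 ℂ) (x : E2) :
    Lop β A Φ (f - g) x = Lop β A Φ f x - Lop β A Φ g x := by
  simp only [Lop, pd_sub, sub_apply, Fin.sum_univ_two]
  ring

/-- difference of operators -/
def Sdif (β R : ℝ) (u u' φ : SchwartzMap E2 ℂ) (x : E2) : ℂ :=
  Lop β (AA R u') (Pot β R u') φ x - Lop β (AA R u) (Pot β R u) φ x

theorem Sdif_nc {β R : ℝ} (hR : 0 < R) (u u' φ : SchwartzMap E2 ℂ) : Nc (Sdif β R u u' φ) :=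
  (Lop_nc (AA_bc hR u') (Pot_bc hR u') φ).sub (Lop_nc (AA_bc hR u) (Pot_bc hR u) φ)

theorem bmul_n2 {f : E2 → ℂ} {g : E2 → ℂ} {C D : ℝ} (hC : 0 ≤ C) (hf : ∀ x, ‖f x‖ ≤ C) (hg : Nc g)
    (hD : n2 g ≤ D) : n2 (fun x => f x * g x) ≤ C * D :=
  (n2_le hC hg fun x => by
    rw [norm_mul]; exact mul_le_mul_of_nonneg_right (hf x) (norm_nonneg _)).trans
    (mul_le_mul_of_nonneg_left hD hC)

theorem Sdif_bd {R : ℝ} (hR : 0 < R) (β m G : ℝ) : ∃ C, 0 ≤ C ∧ ∀ u u' φ, Hb m G u → Hb m G u' → Hb m G φ →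
    n2 (Sdif β R u u' φ) ≤ C * n2 (u' - u : SchwartzMap E2 ℂ) := by
  obtain ⟨CP, hCP, hP⟩ := Pot_diff hR β m G
  refine ⟨2 * (2 * |β| * (R⁻¹ * (2 * |m|)) * |G|) + CP * |m|, by positivity, fun u u' φ hu hu' hφ => ?_⟩
  set W := n2 (u' - u : SchwartzMap E2 ℂ) with hWdef
  have hm := hu.m0
  have hG := hu.G0
  rw [abs_of_nonneg hm, abs_of_nonneg hG]
  have hW : 0 ≤ W := n2_nonneg _
  set a : Fin 2 → E2 → ℝ := fun j x => AA R u' j x - AA R u j x with ha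
  have haB : ∀ j, Bc (a j) := fun j => by
    have := (AA_bc hR u' j).add ((Bc.const (-1)).mul (AA_bc hR u j))
    simpa [ha, sub_eq_add_neg] using this
  have hpB : Bc fun x => Pot β R u' x - Pot β R u x := by
    have := (Pot_bc (β := β) hR u').add ((Bc.const (-1)).mul (Pot_bc (β := β) hR u))
    simpa [sub_eq_add_neg] using this
  have e : Sdif β R u u' φ = fun x => ((-(2 * β * Complex.I) * (a 0 x : ℂ)) * pd φ 0 x +
      (-(2 * β * Complex.I) * (a 1 x : ℂ)) * pd φ 1 x) +
      ((Pot β R u' x - Pot β R u x : ℝ) : ℂ) * φ x := by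
    funext x
    simp only [Sdif, Lop, ha, Fin.sum_univ_two]
    push_cast
    ring
  have hcB : ∀ j, Bc fun x => -(2 * β * Complex.I) * (a j x : ℂ) := fun j =>
    (Bc.const (-(2 * β * Complex.I))).mul (haB j).ofReal
  have N : ∀ j, Nc fun x => (-(2 * β * Complex.I) * (a j x : ℂ)) * pd φ j x := fun j =>
    (hcB j).mulNc (sch_nc _)
  have b : ∀ j, n2 (fun x => (-(2 * β * Complex.I) * (a j x : ℂ)) * pd φ j x) ≤
      (2 * |β| * (R⁻¹ * (2 * m * W))) * G := fun j => by
    refine bmul_n2 (by positivity) (fun x => ?_) (sch_nc _) (hφ.2 j)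
    simp only [norm_mul, norm_neg, Complex.norm_I, Complex.norm_real, Real.norm_eq_abs, mul_one, Complex.norm_ofNat]
    gcongr
    exact a_bd hR hu hu' j x
  have b3 : n2 (fun x => ((Pot β R u' x - Pot β R u x : ℝ) : ℂ) * φ x) ≤ (CP * W) * m := by
    refine bmul_n2 (by positivity) (fun x => ?_) (sch_nc _) hφ.1
    rw [Complex.norm_real]
    exact hP u u' hu hu' x
  rw [e]
  refine (n2_add ((N 0).add (N 1)) (hpB.ofReal.mulNc (sch_nc φ))).trans ?_
  have h2 := n2_add (N 0) (N 1)
  calc _ ≤ (2 * |β| * (R⁻¹ * (2 * m * W))) * G + (2 * |β| * (R⁻¹ * (2 * m * W))) * G + (CP * W) * m := by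
        linarith [b 0, b 1]
    _ = _ := by ring

theorem Lop_bd {R : ℝ} (hR : 0 < R) (β m G : ℝ) (φ : SchwartzMap E2 ℂ) (hφ : Hb m G φ) :
    ∃ C, 0 ≤ C ∧ ∀ u, Hb m G u → n2 (Lop β (AA R u) (Pot β R u) φ) ≤ C := by
  obtain ⟨CS, hCS, hS⟩ := Sdif_bd hR β m G
  refine ⟨CS * (m + m) + n2 (Lop β (AA R φ) (Pot β R φ) φ),
    add_nonneg (mul_nonneg hCS (by linarith [hφ.m0])) (n2_nonneg _), fun u hu => ?_⟩
  have e : Lop β (AA R u) (Pot β R u) φ = fun x => Sdif β R φ u φ x + Lop β (AA R φ) (Pot β R φ) φ x := by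
    funext x; simp [Sdif]
  rw [e]
  refine (n2_add (Sdif_nc hR φ u φ) (Lop_nc (AA_bc hR φ) (Pot_bc hR φ) φ)).trans ?_
  have h1 := hS φ u φ hφ hu hφ
  have h2 : n2 (u - φ : SchwartzMap E2 ℂ) ≤ m + m :=
    (n2_sub (sch_nc u) (sch_nc φ)).trans (add_le_add hu.1 hφ.1)
  have := mul_le_mul_of_nonneg_left h2 hCS
  linarith

theorem Hb.sub {m G : ℝ} {u v : SchwartzMap E2 ℂ} (hu : Hb m G u) (hv : Hb m G v) :
    Hb (m + m) (G + G) (u - v) := by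
  refine ⟨(n2_sub (sch_nc u) (sch_nc v)).trans (add_le_add hu.1 hv.1), fun j => ?_⟩
  rw [pd_sub]
  exact (n2_sub (sch_nc (pd u j)) (sch_nc (pd v j))).trans (add_le_add (hu.2 j) (hv.2 j))

/-! ### the localized `L²` estimate -/

theorem cut_est {R : ℝ} (hR : 0 < R) (β m G : ℝ) : ∃ C, ∀ (φ v : SchwartzMap E2 ℂ) (S p : E2 → ℂ) (Φ : E2 → ℝ),
    Bc Φ → Nc S →
    Hb m G φ → Hb m G v → (∀ x, Complex.I * p x = Lop β (AA R v) Φ φ x + S x) → ∀ r, 0 < r →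
    ∫ x, chi r x * (2 * ((starRingEnd ℂ) (φ x) * p x).re) ≤ C / r + 2 * (n2 φ * n2 S) := by
  obtain ⟨c, hc, hchi⟩ := dchi_bound
  refine ⟨2 * (2 * (c * (|m| * |G|))) + |2 * β| * (2 * (c * (R⁻¹ * m ^ 2 * m ^ 2))),
    fun φ v S p Φ hΦ hS hφ hv hp r hr => ?_⟩
  have hm := hφ.m0
  have hG := hφ.G0
  rw [abs_of_nonneg hm, abs_of_nonneg hG]
  have hnφ := sch_nc φ
  set I1 : Fin 2 → E2 → ℝ := fun j x => ((starRingEnd ℂ) (φ x) * pd φ j x).im with hI1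
  set dI1 : Fin 2 → E2 → ℝ := fun j x =>
    ((starRingEnd ℂ) (pd φ j x) * pd φ j x + (starRingEnd ℂ) (φ x) * pd (pd φ j) j x).im with hdI1
  have nI1 : ∀ j, Nc (I1 j) := fun j => (cm_nc hnφ (sch_nc (pd φ j))).im
  have ndI1 : ∀ j, Nc (dI1 j) := fun j => ((cm_nc (sch_nc (pd φ j)) (sch_nc (pd φ j))).add
    (cm_nc hnφ (sch_nc (pd (pd φ j) j)))).im
  have ibp1 : ∀ j, ∫ x, chi r x * dI1 j x = - ∫ x, dchi r j x * I1 j x := fun j =>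
    ibp (chi_bc r) (dchi_bc hr j) (nI1 j) (ndI1 j) (dchi_line r j) (line_im φ (pd φ j) j)
  set dr : Fin 2 → E2 → ℝ := fun j x => 2 * ((starRingEnd ℂ) (φ x) * pd φ j x).re with hdr
  have ndr : ∀ j, Nc (dr j) := fun j => ((cm_nc hnφ (sch_nc (pd φ j))).re).cmul 2
  have div2 : ∑ j, ∫ x, AA R v j x * (dchi r j x * rho φ x + chi r x * dr j x) = 0 :=
    kc_div hR (rho_nc v) ((chi_bc r).mulNc (rho_nc φ))
      (fun j => ((dchi_bc hr j).mulNc (rho_nc φ)).add ((chi_bc r).mulNc (ndr j)))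
      (fun j x => (dchi_line r j x).mul' (line_rho φ j x))
  set s : E2 → ℝ := fun x => ((starRingEnd ℂ) (φ x) * S x).im with hs
  have ns : Nc s := (cm_nc hnφ hS).im
  set g : Fin 2 → E2 → ℝ := fun j x => AA R v j x * (dchi r j x * rho φ x + chi r x * dr j x) with hg
  have ng : ∀ j, Nc (g j) := fun j => (AA_bc hR v j).mulNc
    (((dchi_bc hr j).mulNc (rho_nc φ)).add ((chi_bc r).mulNc (ndr j)))
  set k : Fin 2 → E2 → ℝ := fun j x => AA R v j x * (dchi r j x * rho φ x) with hk
  have nk : ∀ j, Nc (k j) := fun j => (AA_bc hR v j).mulNc ((dchi_bc hr j).mulNc (rho_nc φ))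
  have hpt : ∀ x, chi r x * (2 * ((starRingEnd ℂ) (φ x) * p x).re) =
      -2 * (chi r x * dI1 0 x) + -2 * (chi r x * dI1 1 x) + (-2 * β) * g 0 x + (-2 * β) * g 1 x
      + (2 * β) * k 0 x + (2 * β) * k 1 x + 2 * (chi r x * s x) := fun x => by
    have hp' : p x = -Complex.I * (Lop β (AA R v) Φ φ x + S x) := by
      rw [← hp x, ← mul_assoc]; simp
    rw [hp']
    simp only [hdI1, hg, hk, hdr, hs, Lop, Fin.sum_univ_two]
    simp
    ring
  rw [integral_congr_ae (ae_of_all _ hpt)]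
  have ic : ∀ j, Integrable fun x => chi r x * dI1 j x := fun j => ((chi_bc r).mulNc (ndI1 j)).int
  have is : Integrable fun x => chi r x * s x := ((chi_bc r).mulNc ns).int
  rw [int_comb7 ((ic 0).const_mul _) ((ic 1).const_mul _) ((ng 0).int.const_mul _) ((ng 1).int.const_mul _)
    ((nk 0).int.const_mul _) ((nk 1).int.const_mul _) (is.const_mul _)]
  simp only [integral_const_mul]
  rw [ibp1, ibp1]
  rw [Fin.sum_univ_two] at div2
  have b1 : ∀ j, |∫ x, dchi r j x * I1 j x| ≤ c / r * (m * G) := fun j => by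
    have hcr : 0 ≤ c / r := by positivity
    refine (abs_int_le hcr hnφ (sch_nc (pd φ j)) fun x => ?_).trans
      (mul_le_mul_of_nonneg_left (mul_le_mul hφ.1 (hφ.2 j) (n2_nonneg _) hm) hcr)
    rw [abs_mul]
    exact mul_le_mul (hchi r hr j x) (abs_im_conj_mul_le _ _) (abs_nonneg _) hcr
  have b2 : ∀ j, |∫ x, k j x| ≤ (R⁻¹ * m ^ 2 * (c / r)) * (m * m) := fun j => by
    have hcr : 0 ≤ R⁻¹ * m ^ 2 * (c / r) := by positivity
    refine (abs_int_le hcr hnφ hnφ fun x => ?_).trans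
      (mul_le_mul_of_nonneg_left (mul_le_mul hφ.1 hφ.1 (n2_nonneg _) hm) hcr)
    simp only [hk]
    rw [← mul_assoc, abs_mul, abs_mul, rho, abs_of_nonneg (sq_nonneg ‖φ x‖), pow_two ‖φ x‖]
    refine mul_le_mul_of_nonneg_right ?_ (by positivity)
    exact mul_le_mul (A_bd hR hv j x) (hchi r hr j x) (abs_nonneg _) (by positivity)
  have b3 : |∫ x, chi r x * s x| ≤ 1 * (n2 φ * n2 S) := by
    refine abs_int_le zero_le_one hnφ hS fun x => ?_
    rw [abs_mul, abs_of_nonneg (chi_nonneg r x)]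
    exact mul_le_mul (chi_le r x) (abs_im_conj_mul_le _ _) (abs_nonneg _) zero_le_one
  have b4 : |2 * β * ((∫ x, k 0 x) + ∫ x, k 1 x)| ≤ |2 * β| * (2 * ((R⁻¹ * m ^ 2 * (c / r)) * (m * m))) := by
    rw [abs_mul]
    gcongr
    refine (abs_add_le _ _).trans ?_
    linarith [b2 0, b2 1]
  have e : (2 * (2 * (c * (m * G))) + |2 * β| * (2 * (c * (R⁻¹ * m ^ 2 * m ^ 2)))) / r =
      2 * (2 * (c / r * (m * G))) + |2 * β| * (2 * ((R⁻¹ * m ^ 2 * (c / r)) * (m * m))) := by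
    field_simp
  rw [e]
  have d2 : (-2 * β) * (∫ x, g 0 x) + (-2 * β) * ∫ x, g 1 x = 0 := by
    rw [← mul_add, div2, mul_zero]
  have := abs_le.1 (b1 0)
  have := abs_le.1 (b1 1)
  have := abs_le.1 b3
  have := abs_le.1 b4
  linarith


/-! ### time estimates -/

theorem normsq_deriv {f : ℝ → ℂ} {f' : ℂ} {t : ℝ} (h : HasDerivAt f f' t) :
    HasDerivAt (fun s => ‖f s‖ ^ 2) (2 * ((starRingEnd ℂ) (f t) * f').re) t := by
  have := h.norm_sq
  rw [Complex.inner] at this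
  rwa [mul_comm (f' : ℂ)] at this

theorem time_est {W dW : ℝ → E2 → ℂ} (hW : Continuous (Function.uncurry W))
    (hdW : Continuous (Function.uncurry dW)) (hd : ∀ t x, HasDerivAt (fun s => W s x) (dW t x) t)
    (hnc : ∀ t, Nc (W t)) {a b C B : ℝ} (hab : a ≤ b)
    (h : ∀ n : ℕ, ∀ t ∈ Icc a b,
      ∫ x, chi (n + 1) x * (2 * ((starRingEnd ℂ) (W t x) * dW t x).re) ≤ C / (n + 1) + B) :
    n2 (W b) ^ 2 ≤ n2 (W a) ^ 2 + B * (b - a) := by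
  have hder : ∀ (n : ℕ) t, HasDerivAt (fun t => ∫ x, chi (n + 1) x * ‖W t x‖ ^ 2)
      (∫ x, chi (n + 1) x * (2 * ((starRingEnd ℂ) (W t x) * dW t x).re)) t := fun n t =>
    cut_deriv (chi_cont _) (chi_supp (by positivity)) (G := fun t x => ‖W t x‖ ^ 2)
      (G' := fun t x => 2 * ((starRingEnd ℂ) (W t x) * dW t x).re)
      (by
        have := hW.norm.pow 2
        exact this)
      (by
        have := (continuous_const (y := (2 : ℝ))).mul (Complex.continuous_re.comp
          ((Complex.continuous_conj.comp hW).mul hdW))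
        exact this)
      (fun t x => normsq_deriv (hd t x)) t
  have h1 : ∀ n : ℕ, ∫ x, chi (n + 1) x * ‖W b x‖ ^ 2 ≤
      n2 (W a) ^ 2 + (C / (n + 1) + B) * (b - a) := fun n => by
    have := (convex_Icc a b).image_sub_le_mul_sub_of_deriv_le
      (fun t _ => (hder n t).continuousAt.continuousWithinAt)
      (fun t _ => (hder n t).differentiableAt.differentiableWithinAt)
      (fun t ht => by rw [(hder n t).deriv]; exact h n t (interior_subset ht))
      a (left_mem_Icc.2 hab) b (right_mem_Icc.2 hab) hab
    have h2 := chi_int_le (hnc a).sq.int (fun x => by positivity) (n + 1)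
    rw [← n2_sq] at h2
    linarith
  rw [n2_sq (W b)]
  refine le_of_tendsto_of_tendsto' (chi_int_tendsto (hnc b).sq.int)
    (g := fun n : ℕ => n2 (W a) ^ 2 + (C / (n + 1) + B) * (b - a)) ?_ h1
  have h3 : Tendsto (fun n : ℕ => C / ((n : ℝ) + 1)) atTop (𝓝 0) := by
    have := (tendsto_one_div_add_atTop_nhds_zero_nat (𝕜 := ℝ)).const_mul C
    simpa [div_eq_mul_inv] using this
  have := ((h3.add_const B).mul_const (b - a)).const_add (n2 (W a) ^ 2)
  simpa using this

theorem sup_sq {f : ℝ → ℝ} {s : Set ℝ} {B0 : ℝ} (hs : s.Nonempty) (h0 : ∀ t, 0 ≤ f t) (hB : ∀ t ∈ s, f t ≤ B0) :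
    ∃ D, 0 ≤ D ∧ (∀ t ∈ s, f t ≤ D) ∧ ∀ Q, (∀ t ∈ s, f t ^ 2 ≤ Q) → D ^ 2 ≤ Q := by
  have hb : BddAbove (f '' s) := ⟨B0, by rintro _ ⟨t, ht, rfl⟩; exact hB t ht⟩
  have hle : ∀ t ∈ s, f t ≤ sSup (f '' s) := fun t ht => le_csSup hb ⟨t, ht, rfl⟩
  obtain ⟨t0, ht0⟩ := hs
  have hD : 0 ≤ sSup (f '' s) := (h0 t0).trans (hle t0 ht0)
  refine ⟨sSup (f '' s), hD, hle, fun Q hQ => ?_⟩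
  have hQ0 : 0 ≤ Q := (sq_nonneg _).trans (hQ t0 ht0)
  have : sSup (f '' s) ≤ √Q := csSup_le ⟨_, t0, ht0, rfl⟩ (by
    rintro _ ⟨t, ht, rfl⟩
    exact Real.le_sqrt_of_sq_le (hQ t ht))
  calc _ ≤ (√Q) ^ 2 := by gcongr
    _ = Q := Real.sq_sqrt hQ0

/-- A classical solution. -/
structure Sol (β R : ℝ) (u : ℝ → SchwartzMap E2 ℂ) (du : ℝ → E2 → ℂ) : Prop where
  cu : Continuous (Function.uncurry fun t x => u t x)
  cdu : Continuous (Function.uncurry du)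
  cpd : ∀ j, Continuous (Function.uncurry fun t x => pd (u t) j x)
  hd : ∀ t x, HasDerivAt (fun s => u s x) (du t x) t
  eq : ∀ t x, Complex.I * du t x = Lop β (AA R (u t)) (Pot β R (u t)) (u t) x

theorem Sol.mk' {β R : ℝ} (hR : 0 < R) {u : ℝ → SchwartzMap E2 ℂ} {du : ℝ → E2 → ℂ}
    (h : ContDiff ℝ (⊤ : ℕ∞) fun p : ℝ × E2 => u p.1 p.2)
    (hd : ∀ t x, HasDerivAt (fun s => u s x) (du t x) t)
    (he : ∀ t x, Complex.I * du t x = cssRHS β R (⇑(u t)) x) : Sol β R u du := by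
  have hc : Continuous (fderiv ℝ fun p : ℝ × E2 => u p.1 p.2) :=
    h.continuous_fderiv (by simp)
  have hdf : Differentiable ℝ fun p : ℝ × E2 => u p.1 p.2 := h.differentiable (by simp)
  refine ⟨h.continuous, ?_, fun j => ?_, hd, fun t x => (he t x).trans (css_eq hR _ _)⟩
  · have : Function.uncurry du = fun p => fderiv ℝ (fun p : ℝ × E2 => u p.1 p.2) p (1, 0) := by
      funext ⟨t, x⟩
      refine (hd t x).unique ?_
      have h1 := (hdf (t, x)).hasFDerivAt.comp_hasDerivAt t ((hasDerivAt_id t).prodMk (hasDerivAt_const t x))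
      exact h1
    rw [this]
    exact hc.clm_apply continuous_const
  · have : (Function.uncurry fun t x => pd (u t) j x) =
        fun p => fderiv ℝ (fun p : ℝ × E2 => u p.1 p.2) p (0, e2 j) := by
      funext ⟨t, x⟩
      have h1 : HasFDerivAt (fun y => u t y) _ x := (hdf (t, x)).hasFDerivAt.comp x
        ((hasFDerivAt_const t x).prodMk (hasFDerivAt_id x))
      simp only [Function.uncurry]
      rw [pd_apply]
      have h2 : HasFDerivAt (u t) (fderiv ℝ (u t) x) x := (u t).differentiableAt.hasFDerivAt
      rw [h2.unique h1]
      simp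
    rw [this]
    exact hc.clm_apply continuous_const

theorem Sol.du_nc {β R : ℝ} (hR : 0 < R) {u : ℝ → SchwartzMap E2 ℂ} {du : ℝ → E2 → ℂ}
    (h : Sol β R u du) (t : ℝ) : Nc (du t) := by
  have h1 : du t = fun x => -Complex.I * Lop β (AA R (u t)) (Pot β R (u t)) (u t) x := by
    funext x
    rw [← h.eq, ← mul_assoc]; simp
  rw [h1]
  exact (Lop_nc (AA_bc hR (u t)) (Pot_bc hR (u t)) (u t)).cmul _

theorem Hb.weak {m G : ℝ} {u : SchwartzMap E2 ℂ} (hu : Hb m G u) : Hb (m + m) (G + G) u :=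
  ⟨by linarith [hu.1, hu.m0], fun j => by linarith [hu.2 j, hu.G0]⟩

/-- the base-point estimate -/
theorem step1 {β R : ℝ} (hR : 0 < R) {u : ℝ → SchwartzMap E2 ℂ} {du : ℝ → E2 → ℂ}
    (h : Sol β R u du) {m G a b : ℝ} (hab : a ≤ b) (hb : ∀ t ∈ Icc a b, Hb m G (u t)) :
    ∃ σ, 0 ≤ σ ∧ ∀ t ∈ Icc a b, n2 (u t - u a : SchwartzMap E2 ℂ) ≤ σ * (t - a) := by
  have ha := hb a (left_mem_Icc.2 hab)
  obtain ⟨σ, hσ, hS⟩ := Lop_bd hR β m G (u a) ha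
  obtain ⟨C, hC⟩ := cut_est hR β (m + m) (G + G)
  refine ⟨2 * σ, by positivity, fun t ht => ?_⟩
  have hsub : Icc a t ⊆ Icc a b := Icc_subset_Icc_right ht.2
  obtain ⟨D, hD0, hD, hDQ⟩ := sup_sq (f := fun s => n2 (u s - u a : SchwartzMap E2 ℂ)) (s := Icc a t) (B0 := m + m)
    ⟨a, left_mem_Icc.2 ht.1⟩ (fun _ => n2_nonneg _) (fun s hs => ((hb s (hsub hs)).sub ha).1)
  have key : ∀ s ∈ Icc a t, n2 (u s - u a : SchwartzMap E2 ℂ) ^ 2 ≤ 2 * (D * σ) * (t - a) := fun s hs => by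
    have h1 := time_est (W := fun s x => (u s - u a : SchwartzMap E2 ℂ) x) (dW := du) (a := a) (b := s) (C := C) (B := 2 * (D * σ))
      (by
        have := h.cu.sub (u a).continuous.snd'
        exact this) h.cdu
      (fun t x => by simpa using (h.hd t x).sub_const (u a x)) (fun t => sch_nc _) hs.1
      (fun n τ hτ => by
        have hτ' : τ ∈ Icc a t := ⟨hτ.1, hτ.2.trans hs.2⟩
        have hbτ := hb τ (hsub hτ')
        have := hC (u τ - u a) (u τ) (Lop β (AA R (u τ)) (Pot β R (u τ)) (u a)) (du τ)
          (Pot β R (u τ)) (Pot_bc hR _) (Lop_nc (AA_bc hR _) (Pot_bc hR _) _) (hbτ.sub ha) hbτ.weak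
          (fun x => by rw [h.eq, Lop_sub]; ring) (n + 1) (by positivity)
        refine this.trans ?_
        have := mul_le_mul (hD τ hτ') (hS _ hbτ) (n2_nonneg _) hD0
        linarith)
    have h0 : n2 (fun x => (u a - u a : SchwartzMap E2 ℂ) x) = 0 := by simp [n2]
    simp only [h0] at h1
    have : 2 * (D * σ) * (s - a) ≤ 2 * (D * σ) * (t - a) := by
      apply mul_le_mul_of_nonneg_left _ (by positivity); linarith [hs.2]
    have h2 : n2 (u s - u a : SchwartzMap E2 ℂ) = n2 (fun x => (u s - u a : SchwartzMap E2 ℂ) x) := rfl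
    rw [h2]
    linarith
  have h3 := hDQ _ key
  have h4 := hD t (right_mem_Icc.2 ht.1)
  refine h4.trans ?_
  have h5 : 0 ≤ t - a := by linarith [ht.1]
  rcases hD0.eq_or_lt with h6 | h6
  · rw [← h6]; positivity
  · nlinarith

/-- Lipschitz in time on short intervals -/
theorem step2 {β R : ℝ} (hR : 0 < R) (m G : ℝ) : ∃ δ, 0 < δ ∧ ∀ {u : ℝ → SchwartzMap E2 ℂ} {du : ℝ → E2 → ℂ}
    (_ : Sol β R u du) {a b : ℝ} (_ : a ≤ b) (_ : b - a ≤ δ) (_ : ∀ t ∈ Icc a b, Hb m G (u t)),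
    ∃ L, 0 ≤ L ∧ ∀ s ∈ Icc a b, ∀ t ∈ Icc a b, n2 (u t - u s : SchwartzMap E2 ℂ) ≤ L * |t - s| := by
  obtain ⟨c, hc, hS⟩ := Sdif_bd hR β m G
  obtain ⟨C, hC⟩ := cut_est hR β (m + m) (G + G)
  refine ⟨1 / (4 * (c + 1)), by positivity, fun {u du} h {a b} hab hδ hb => ?_⟩
  obtain ⟨σ, hσ, hσ1⟩ := step1 hR h hab hb
  have main : ∀ s ∈ Icc a b, ∀ t ∈ Icc a b, s ≤ t → n2 (u t - u s : SchwartzMap E2 ℂ) ≤ 2 * σ * (t - s) := by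
    intro s hs t ht hst
    set k := t - s with hk
    have hk0 : 0 ≤ k := by linarith
    have hm1 : ∀ τ ∈ Icc a s, τ ∈ Icc a b := fun τ hτ => ⟨hτ.1, hτ.2.trans hs.2⟩
    have hm2 : ∀ τ ∈ Icc a s, τ + k ∈ Icc a b := fun τ hτ => ⟨by linarith [hτ.1], by linarith [hτ.2, ht.2]⟩
    obtain ⟨D, hD0, hD, hDQ⟩ := sup_sq (f := fun τ => n2 (u (τ + k) - u τ : SchwartzMap E2 ℂ)) (s := Icc a s) (B0 := m + m)
      ⟨a, left_mem_Icc.2 hs.1⟩ (fun _ => n2_nonneg _) (fun τ hτ => ((hb _ (hm2 τ hτ)).sub (hb τ (hm1 τ hτ))).1)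
    set f0 := n2 (u (a + k) - u a : SchwartzMap E2 ℂ) with hf0
    have hf : f0 ≤ σ * k := by
      have := hσ1 (a + k) (hm2 a (left_mem_Icc.2 hs.1))
      rwa [add_sub_cancel_left] at this
    have key : ∀ τ ∈ Icc a s, n2 (u (τ + k) - u τ : SchwartzMap E2 ℂ) ^ 2 ≤ f0 ^ 2 + D ^ 2 / 2 := fun τ hτ => by
      have h1 := time_est (W := fun τ x => (u (τ + k) - u τ : SchwartzMap E2 ℂ) x)
        (dW := fun τ x => du (τ + k) x - du τ x) (a := a) (b := τ) (C := C) (B := 2 * (D * (c * D)))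
        (by
          have h1 : Continuous fun p : ℝ × E2 => u (p.1 + k) p.2 :=
            h.cu.comp ((continuous_fst.add continuous_const).prodMk continuous_snd)
          exact h1.sub h.cu)
        (by
          have h1 : Continuous fun p : ℝ × E2 => du (p.1 + k) p.2 :=
            h.cdu.comp ((continuous_fst.add continuous_const).prodMk continuous_snd)
          exact h1.sub h.cdu)
        (fun t x => by
          have := ((h.hd (t + k) x).comp_add_const t k).sub (h.hd t x)
          exact this) (fun t => sch_nc _) hτ.1
        (fun n r hr => by
          have hr' : r ∈ Icc a s := ⟨hr.1, hr.2.trans hτ.2⟩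
          have hb1 := hb r (hm1 r hr')
          have hb2 := hb _ (hm2 r hr')
          have := hC (u (r + k) - u r) (u (r + k)) (Sdif β R (u r) (u (r + k)) (u r))
            (fun x => du (r + k) x - du r x)
            (Pot β R (u (r + k))) (Pot_bc hR _) (Sdif_nc hR _ _ _) (hb2.sub hb1) hb2.weak
            (fun x => by rw [mul_sub, h.eq, h.eq, Lop_sub, Sdif]; ring) (n + 1) (by positivity)
          refine this.trans ?_
          have h7 := hD r hr'
          have h8 : n2 (Sdif β R (u r) (u (r + k)) (u r)) ≤ c * D :=
            (hS _ _ _ hb1 hb2 hb1).trans (mul_le_mul_of_nonneg_left h7 hc)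
          have := mul_le_mul h7 h8 (n2_nonneg _) hD0
          linarith)
      have h2 : ∀ τ, n2 (u (τ + k) - u τ : SchwartzMap E2 ℂ) = n2 (fun x => (u (τ + k) - u τ : SchwartzMap E2 ℂ) x) := fun _ => rfl
      rw [h2, hf0, h2]
      refine h1.trans ?_
      have h3 : τ - a ≤ 1 / (4 * (c + 1)) := by linarith [hτ.2, hs.2]
      have h4 : 2 * (D * (c * D)) * (τ - a) ≤ 2 * (D * (c * D)) * (1 / (4 * (c + 1))) :=
        mul_le_mul_of_nonneg_left h3 (by positivity)
      have h5 : 2 * (D * (c * D)) * (1 / (4 * (c + 1))) ≤ D ^ 2 / 2 := by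
        rw [mul_one_div, div_le_div_iff₀ (by positivity) (by positivity)]
        nlinarith [sq_nonneg D]
      linarith
    have h3 := hDQ _ key
    have h4 := hD s (right_mem_Icc.2 hs.1)
    simp only [hk, add_sub_cancel] at h4
    refine h4.trans ?_
    have h5 : f0 ^ 2 ≤ (σ * k) ^ 2 := pow_le_pow_left₀ (n2_nonneg _) hf 2
    refine abs_le_of_sq_le_sq' ?_ (by positivity) |>.2
    nlinarith
  refine ⟨2 * σ, by positivity, fun s hs t ht => ?_⟩
  rcases le_total s t with hst | hst
  · rw [abs_of_nonneg (by linarith)]; exact main s hs t ht hst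
  · rw [abs_sub_comm, abs_of_nonneg (by linarith)]
    have : n2 (u t - u s : SchwartzMap E2 ℂ) = n2 (u s - u t : SchwartzMap E2 ℂ) := by
      simp only [n2, sub_apply]; simp_rw [norm_sub_rev]
    rw [this]
    exact main t ht s hs hst


/-! ### conservation of energy -/

theorem pair_deriv {β R : ℝ} {u : ℝ → SchwartzMap E2 ℂ} {du : ℝ → E2 → ℂ}
    (h : Sol β R u du) {p : E2 → ℂ} (hp : Continuous p) {r : ℝ} (hr : 0 < r) (t : ℝ) :
    HasDerivAt (fun t => ∫ x, chi r x * ((starRingEnd ℂ) (u t x) * p x).re)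
      (∫ x, chi r x * ((starRingEnd ℂ) (du t x) * p x).re) t :=
  cut_deriv (chi_cont _) (chi_supp hr) (G := fun t x => ((starRingEnd ℂ) (u t x) * p x).re)
    (G' := fun t x => ((starRingEnd ℂ) (du t x) * p x).re)
    (by
      have := Complex.continuous_re.comp ((Complex.continuous_conj.comp h.cu).mul hp.snd')
      exact this)
    (by
      have := Complex.continuous_re.comp ((Complex.continuous_conj.comp h.cdu).mul hp.snd')
      exact this)
    (fun t x => by
      have h1 := (Complex.conjCLE.toContinuousLinearMap.hasFDerivAt.comp_hasDerivAt t (h.hd t x)).mul_const (p x)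
      exact Complex.reCLM.hasFDerivAt.comp_hasDerivAt t h1) t

theorem pair_diff (u v : SchwartzMap E2 ℂ) {p : E2 → ℂ} (hp : Nc p) (r : ℝ) :
    (∫ x, chi r x * ((starRingEnd ℂ) (u x) * p x).re) - (∫ x, chi r x * ((starRingEnd ℂ) (v x) * p x).re)
      = ∫ x, chi r x * ((starRingEnd ℂ) ((u - v : SchwartzMap E2 ℂ) x) * p x).re := by
  rw [← integral_sub ((chi_bc r).mulNc ((sch_nc u).conj.mul hp).re).int
    ((chi_bc r).mulNc ((sch_nc v).conj.mul hp).re).int]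
  refine integral_congr_ae (ae_of_all _ fun x => ?_)
  simp only [sub_apply, map_sub, sub_mul, Complex.sub_re]
  ring

theorem deriv_abs_le {F : ℝ → ℝ} {q L a b s : ℝ} (hab : a < b) (hs : s ∈ Icc a b) (h : HasDerivAt F q s)
    (hL : ∀ t ∈ Icc a b, |F t - F s| ≤ L * |t - s|) : |q| ≤ L := by
  have h1 := hasDerivWithinAt_iff_tendsto_slope.1 (h.hasDerivWithinAt (s := Icc a b))
  have hne : (𝓝[Icc a b \ {s}] s).NeBot := by
    have := (uniqueDiffOn_Icc hab s hs)
    exact accPt_principal_iff_nhdsWithin.1 (uniqueDiffWithinAt_iff_accPt.1 this)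
  refine le_of_tendsto h1.abs ?_
  filter_upwards [self_mem_nhdsWithin] with t ht
  have h2 : 0 < |t - s| := abs_pos.2 (sub_ne_zero.2 ht.2)
  rw [slope_def_field, abs_div, div_le_iff₀ h2]
  exact hL t ht.1

theorem conj_self (z : ℂ) : ((starRingEnd ℂ) z * z).re = ‖z‖ ^ 2 := by
  rw [mul_comm, Complex.mul_conj, Complex.ofReal_re, Complex.normSq_eq_norm_sq]
theorem conj_I_self (z : ℂ) : ((starRingEnd ℂ) z * (Complex.I * z)).re = 0 := by
  simp; ring

theorem du_bd {β R : ℝ} (hR : 0 < R) {u : ℝ → SchwartzMap E2 ℂ} {du : ℝ → E2 → ℂ}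
    (h : Sol β R u du) {a b L : ℝ} (hab : a < b)
    (hL : ∀ s ∈ Icc a b, ∀ t ∈ Icc a b, n2 (u t - u s : SchwartzMap E2 ℂ) ≤ L * |t - s|) :
    ∀ s ∈ Icc a b, n2 (du s) ≤ L := by
  intro s hs
  have hp := h.du_nc hR s
  have h1 : ∀ n : ℕ, ∫ x, chi (n + 1) x * ‖du s x‖ ^ 2 ≤ L * n2 (du s) := fun n => by
    have hd := pair_deriv h hp.cont (r := n + 1) (by positivity) s
    simp only [conj_self] at hd
    refine (le_abs_self _).trans (deriv_abs_le hab hs hd fun t ht => ?_)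
    rw [pair_diff _ _ hp]
    have h2 := abs_int_le (C := 1) zero_le_one (sch_nc (u t - u s)) hp
      (h := fun x => chi (n + 1) x * ((starRingEnd ℂ) ((u t - u s : SchwartzMap E2 ℂ) x) * du s x).re) fun x => by
        rw [abs_mul, abs_of_nonneg (chi_nonneg _ _)]
        exact mul_le_mul (chi_le _ _) (abs_re_conj_mul_le _ _) (abs_nonneg _) zero_le_one
    refine h2.trans ?_
    have := mul_le_mul_of_nonneg_right (hL s hs t ht) (n2_nonneg (du s))
    linarith
  have h2 := int_le_of_chi hp.sq.int h1
  rw [← n2_sq] at h2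
  rcases (n2_nonneg (du s)).eq_or_lt with h3 | h3
  · rw [← h3]
    have h4 := hL a ⟨le_rfl, hab.le⟩ b ⟨hab.le, le_rfl⟩
    have h5 := (n2_nonneg _).trans h4
    exact nonneg_of_mul_nonneg_left h5 (abs_pos.2 (sub_ne_zero.2 hab.ne'))
  · nlinarith

theorem tail_small {p : E2 → ℂ} (hp : Nc p) {ε : ℝ} (hε : 0 < ε) :
    ∃ r, 0 < r ∧ n2 (fun x => (1 - chi r x) * ‖p x‖) ≤ ε := by
  have h1 := (chi_int_tendsto hp.sq.int).const_sub (∫ x, ‖p x‖ ^ 2)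
  rw [sub_self] at h1
  obtain ⟨n, hn⟩ := (h1.eventually (gt_mem_nhds (by positivity : (0:ℝ) < ε ^ 2))).exists
  refine ⟨n + 1, by positivity, Real.sqrt_le_iff.2 ⟨hε.le, ?_⟩⟩
  rw [← integral_sub hp.sq.int ((chi_bc _).mulNc hp.sq).int] at hn
  refine le_trans ?_ hn.le
  refine integral_mono_of_nonneg (ae_of_all _ fun x => by positivity)
    (hp.sq.sub ((chi_bc _).mulNc hp.sq)).int (ae_of_all _ fun x => ?_)
  have h2 := chi_nonneg (n + 1) x
  have h3 := chi_le (n + 1) x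
  simp only [Real.norm_eq_abs, sq_abs, mul_pow]
  have : (1 - chi (n + 1) x) ^ 2 ≤ 1 - chi (n + 1) x := by nlinarith
  nlinarith [sq_nonneg ‖p x‖]

theorem energy_short {β R : ℝ} (hR : 0 < R) (m G : ℝ) : ∃ δ, 0 < δ ∧ ∀ {u : ℝ → SchwartzMap E2 ℂ} {du : ℝ → E2 → ℂ}
    (_ : Sol β R u du) {a b : ℝ} (_ : a ≤ b) (_ : b - a ≤ δ) (_ : ∀ t ∈ Icc a b, Hb m G (u t)),
    energy β R (u a) = energy β R (u b) := by
  obtain ⟨δ, hδ, H⟩ := step2 (β := β) hR m G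
  obtain ⟨C, hC, hE⟩ := energy_cmp hR β m G
  refine ⟨δ, hδ, fun {u du} h {a b} hab hd hb => ?_⟩
  rcases hab.eq_or_lt with rfl | hlt
  · rfl
  obtain ⟨L, hL0, hL⟩ := H h hab hd hb
  have hdu := du_bd hR h hlt hL
  have hp : ∀ s, Nc fun x => Complex.I * du s x := fun s => (h.du_nc hR s).cmul _
  have hpn : ∀ s, n2 (fun x => Complex.I * du s x) = n2 (du s) := fun s => by simp [n2]
  have low : ∀ s ∈ Icc a b, ∀ t ∈ Icc a b,
      2 * (∫ x, ((starRingEnd ℂ) ((u t - u s : SchwartzMap E2 ℂ) x) * (Complex.I * du s x)).re)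
        - C * (L * |t - s|) ^ 2 ≤ energy β R (u t) - energy β R (u s) := fun s hs t ht => by
    have h1 := hE (u s) (u t) (hb s hs) (hb t ht)
    have e : ∀ x, cssRHS β R (u s) x = Complex.I * du s x := fun x => by
      rw [css_eq hR, h.eq]
    simp only [e] at h1
    have h2 : C * n2 (u t - u s : SchwartzMap E2 ℂ) ^ 2 ≤ C * (L * |t - s|) ^ 2 :=
      mul_le_mul_of_nonneg_left (pow_le_pow_left₀ (n2_nonneg _) (hL s hs t ht) 2) hC
    linarith
  have lip : ∀ s ∈ Icc a b, ∀ t ∈ Icc a b,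
      -((2 * (L * L) + C * L ^ 2 * (b - a)) * |t - s|) ≤ energy β R (u t) - energy β R (u s) := fun s hs t ht => by
    have h1 := abs_int_le (C := 1) zero_le_one (sch_nc (u t - u s)) (hp s)
      (h := fun x => ((starRingEnd ℂ) ((u t - u s : SchwartzMap E2 ℂ) x) * (Complex.I * du s x)).re) fun x => by
        rw [one_mul]; exact abs_re_conj_mul_le _ _
    rw [hpn, one_mul] at h1
    have h2 := mul_le_mul (hL s hs t ht) (hdu s hs) (n2_nonneg _) (by positivity)
    have h3 := (abs_le.1 (h1.trans h2)).1
    have h4 := low s hs t ht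
    have h5 : |t - s| ≤ b - a := abs_le.2 ⟨by linarith [hs.1, hs.2, ht.1, ht.2], by linarith [hs.1, hs.2, ht.1, ht.2]⟩
    have h6 : C * (L * |t - s|) ^ 2 ≤ C * L ^ 2 * (b - a) * |t - s| := by
      have : C * L ^ 2 * |t - s| * |t - s| ≤ C * L ^ 2 * |t - s| * (b - a) :=
        mul_le_mul_of_nonneg_left h5 (by positivity)
      nlinarith
    nlinarith
  set M := 2 * (L * L) + C * L ^ 2 * (b - a) with hM
  have hM0 : 0 ≤ M := by
    have : 0 ≤ b - a := by linarith
    positivity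
  refine const_of_lower (E := fun t => energy β R (u t)) hab ?_ ?_
  · refine (LipschitzOnWith.of_dist_le_mul (K := M.toNNReal) fun s hs t ht => ?_).continuousOn
    rw [Real.dist_eq, Real.dist_eq, Real.coe_toNNReal M hM0]
    have h1 := lip s hs t ht
    have h2 := lip t ht s hs
    rw [abs_sub_comm t s] at h1
    exact abs_le.2 ⟨by linarith, by linarith⟩
  · intro s hs ε hε
    obtain ⟨r, hr, htail⟩ := tail_small (hp s) (ε := ε / (8 * (L + 1))) (by positivity)
    have hder := pair_deriv h (hp s).cont hr s
    simp only [conj_I_self, mul_zero, integral_zero] at hder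
    have ho := (hasDerivAt_iff_isLittleO.1 hder).def (c := ε / 8) (by positivity)
    have hnear : ∀ᶠ t in 𝓝 s, |t - s| < ε / (4 * (C * L ^ 2 + 1)) := by
      have : Tendsto (fun t => |t - s|) (𝓝 s) (𝓝 0) := by
        have : Continuous fun t : ℝ => |t - s| := by fun_prop
        simpa using this.tendsto s
      exact this.eventually (gt_mem_nhds (by positivity))
    filter_upwards [mem_nhdsWithin_of_mem_nhds ho, mem_nhdsWithin_of_mem_nhds hnear, self_mem_nhdsWithin] with t h1 h2 ht
    simp only [smul_zero, sub_zero, Real.norm_eq_abs] at h1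
    rw [pair_diff _ _ (hp s)] at h1
    have h3 := low s hs t ht
    have hW := hL s hs t ht
    have hnc := ((sch_nc (u t - u s)).conj.mul (hp s)).re
    have hsplit : (∫ x, ((starRingEnd ℂ) ((u t - u s : SchwartzMap E2 ℂ) x) * (Complex.I * du s x)).re) =
        (∫ x, chi r x * ((starRingEnd ℂ) ((u t - u s : SchwartzMap E2 ℂ) x) * (Complex.I * du s x)).re) +
        ∫ x, (1 - chi r x) * ((starRingEnd ℂ) ((u t - u s : SchwartzMap E2 ℂ) x) * (Complex.I * du s x)).re := by
      have hbc : Bc fun x => 1 - chi r x := by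
        simpa [sub_eq_add_neg] using (Bc.const (1:ℝ)).add ((Bc.const (-1:ℝ)).mul (chi_bc r))
      rw [← integral_add ((chi_bc r).mulNc hnc).int (hbc.mulNc hnc).int]
      refine integral_congr_ae (ae_of_all _ fun x => ?_)
      simp only; ring
    have hbc : Bc fun x => 1 - chi r x := by
      simpa [sub_eq_add_neg] using (Bc.const (1:ℝ)).add ((Bc.const (-1:ℝ)).mul (chi_bc r))
    have h4 := abs_int_le (C := 1) zero_le_one (sch_nc (u t - u s)) (hbc.mulNc (hp s).norm)
      (h := fun x => (1 - chi r x) * ((starRingEnd ℂ) ((u t - u s : SchwartzMap E2 ℂ) x) * (Complex.I * du s x)).re) fun x => by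
        have h0 : 0 ≤ 1 - chi r x := sub_nonneg.2 (chi_le r x)
        rw [abs_mul, abs_of_nonneg h0, one_mul, norm_mul, Real.norm_of_nonneg h0, norm_norm]
        have := mul_le_mul_of_nonneg_left (abs_re_conj_mul_le ((u t - u s : SchwartzMap E2 ℂ) x) (Complex.I * du s x)) h0
        linarith
    rw [one_mul] at h4
    have h5 := mul_le_mul hW htail (n2_nonneg _) (by positivity)
    have h6 : L * |t - s| * (ε / (8 * (L + 1))) ≤ ε / 8 * |t - s| := by
      have : L * (ε / (8 * (L + 1))) ≤ ε / 8 := by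
        rw [mul_div_assoc', div_le_div_iff₀ (by positivity) (by positivity)]; nlinarith
      nlinarith [abs_nonneg (t - s)]
    have h7 : C * (L * |t - s|) ^ 2 ≤ ε / 4 * |t - s| := by
      have : C * L ^ 2 * |t - s| ≤ ε / 4 := by
        have h8 : C * L ^ 2 * |t - s| ≤ C * L ^ 2 * (ε / (4 * (C * L ^ 2 + 1))) :=
          mul_le_mul_of_nonneg_left h2.le (by positivity)
        refine h8.trans ?_
        rw [mul_div_assoc', div_le_div_iff₀ (by positivity) (by positivity)]; nlinarith
      nlinarith [abs_nonneg (t - s)]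
    have h8 := (abs_le.1 h1).1
    have h9 := (abs_le.1 (h4.trans (h5.trans h6))).1
    rw [hsplit] at h3
    have := mul_nonneg hε.le (abs_nonneg (t - s))
    linarith

theorem energy_const {β R : ℝ} (hR : 0 < R) (m G : ℝ) {u : ℝ → SchwartzMap E2 ℂ} {du : ℝ → E2 → ℂ}
    (h : Sol β R u du) {a b : ℝ} (hab : a ≤ b) (hb : ∀ t ∈ Icc a b, Hb m G (u t)) :
    energy β R (u a) = energy β R (u b) := by
  obtain ⟨δ, hδ, H⟩ := energy_short (β := β) hR m G
  classical
  refine const_of_short (g := fun t => if Hb m G (u t) then 0 else 1) (E := fun t => energy β R (u t))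
    (G := 0) hδ (fun a b hab hd hg => H h hab hd fun t ht => ?_) a b hab fun t ht => ?_
  · have := hg t ht
    by_contra hn
    simp [hn] at this
    linarith
  · simp [hb t ht]


/-! ### uniform comparison of the energy and the gradient -/

theorem AA_hardy {R : ℝ} (hR : 0 < R) (u : SchwartzMap E2 ℂ) (j : Fin 2) (x : E2) :
    |AA R u j x| ≤ 2 * ∑ k, ∫ y, |2 * ((starRingEnd ℂ) (u y) * pd u k y).re| := by
  have hρ := rho_nc u
  have hd : ∀ k, Nc fun y => 2 * ((starRingEnd ℂ) (u y) * pd u k y).re := fun k =>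
    ((sch_nc u).conj.mul (sch_nc (pd u k))).re.cmul 2
  have h1 := hardy hR (hρ.shift x) (fun y => by unfold rho; positivity)
    (dφ := fun k y => -(2 * ((starRingEnd ℂ) (u (x - y)) * pd u k (x - y)).re))
    (fun k => ((hd k).shift x).neg) (fun k y => line_shift (line_rho u k (x - y)))
  have h2 : ∀ k, ∫ y, |-(2 * ((starRingEnd ℂ) (u (x - y)) * pd u k (x - y)).re)|
      = ∫ y, |2 * ((starRingEnd ℂ) (u y) * pd u k y).re| := fun k => by
    simp only [abs_neg]
    exact integral_sub_left_eq_self (fun y => |2 * ((starRingEnd ℂ) (u y) * pd u k y).re|) volume x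
  simp only [h2] at h1
  have h3 : AA R u j x = ∫ y, rho u (x - y) * K R y j := by
    unfold AA kc
    rw [← integral_sub_left_eq_self (fun y => rho u y * K R (x - y) j) volume x]
    simp
  rw [h3]
  refine (abs_integral_le_integral_abs).trans ?_
  refine le_trans ?_ (mul_le_mul_of_nonneg_left h1 zero_le_two)
  rw [← integral_const_mul]
  have hbc : Bc fun y : E2 => (√(R ^ 2 + q2 y))⁻¹ := by
    have hRs : ∀ y : E2, R ≤ √(R ^ 2 + q2 y) := fun y =>
      Real.le_sqrt_of_sq_le (by have := q2_nonneg y; linarith)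
    refine ⟨(continuous_const.add q2_cont).sqrt.inv₀ fun y => (hR.trans_le (hRs y)).ne', R⁻¹, fun y => ?_⟩
    rw [Real.norm_of_nonneg (by positivity)]
    exact inv_anti₀ hR (hRs y)
  refine integral_mono_of_nonneg (ae_of_all _ fun y => abs_nonneg _)
    ((hbc.mulNc (hρ.shift x)).cmul 2).int (ae_of_all _ fun y => ?_)
  have h0 : 0 ≤ rho u (x - y) := by unfold rho; positivity
  simp only [abs_mul, abs_of_nonneg h0]
  have := mul_le_mul_of_nonneg_left (K_bound2 hR y j) h0
  linarith

theorem AA_D {R : ℝ} (hR : 0 < R) (β : ℝ) (u : SchwartzMap E2 ℂ) (j : Fin 2) (x : E2) :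
    |AA R u j x| ≤ 4 * n2 u * ∑ k, n2 (Dd β R u k) := by
  refine (AA_hardy hR u j x).trans ?_
  have : ∀ k, ∫ y, |2 * ((starRingEnd ℂ) (u y) * pd u k y).re| ≤ 2 * (n2 u * n2 (Dd β R u k)) := fun k => by
    refine (le_abs_self _).trans (abs_int_le zero_le_two (sch_nc u) (Dd_nc hR u k) fun y => ?_)
    have e : ((starRingEnd ℂ) (u y) * pd u k y).re
        = ((starRingEnd ℂ) (u y) * (Complex.I * Dd β R u k y)).re := by
      simp only [Dd]
      simp
      ring
    rw [e, abs_abs, abs_mul, abs_two]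
    have := abs_re_conj_mul_le (u y) (Complex.I * Dd β R u k y)
    rw [norm_mul, Complex.norm_I, one_mul] at this
    linarith
  simp only [Fin.sum_univ_two]
  nlinarith [this 0, this 1]

theorem AA_P {R : ℝ} (hR : 0 < R) (u : SchwartzMap E2 ℂ) (j : Fin 2) (x : E2) :
    |AA R u j x| ≤ 4 * n2 u * ∑ k, n2 (pd u k) := by
  refine (AA_hardy hR u j x).trans ?_
  have : ∀ k, ∫ y, |2 * ((starRingEnd ℂ) (u y) * pd u k y).re| ≤ 2 * (n2 u * n2 (pd u k)) := fun k => by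
    refine (le_abs_self _).trans (abs_int_le zero_le_two (sch_nc u) (sch_nc (pd u k)) fun y => ?_)
    rw [abs_abs, abs_mul, abs_two]
    have := abs_re_conj_mul_le (u y) (pd u k y)
    linarith
  simp only [Fin.sum_univ_two]
  nlinarith [this 0, this 1]

theorem sum_cmp {k : ℝ} (hk : 0 ≤ k) {p d : Fin 2 → ℝ} (hp : ∀ j, 0 ≤ p j) (hd : ∀ j, 0 ≤ d j)
    (h : ∀ j, p j ≤ d j + k * ∑ i, d i) : ∑ j, p j ^ 2 ≤ (2 + 8 * k ^ 2) * ∑ j, d j ^ 2 := by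
  simp only [Fin.sum_univ_two] at *
  have key : ∀ j, p j ^ 2 ≤ 2 * d j ^ 2 + 2 * k ^ 2 * (2 * (d 0 ^ 2 + d 1 ^ 2)) := fun j => by
    have h1 : p j ^ 2 ≤ (d j + k * (d 0 + d 1)) ^ 2 := pow_le_pow_left₀ (hp j) (h j) 2
    have h2 : (d j + k * (d 0 + d 1)) ^ 2 ≤ 2 * d j ^ 2 + 2 * (k * (d 0 + d 1)) ^ 2 := by
      nlinarith [sq_nonneg (d j - k * (d 0 + d 1))]
    have h3 : (k * (d 0 + d 1)) ^ 2 ≤ k ^ 2 * (2 * (d 0 ^ 2 + d 1 ^ 2)) := by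
      rw [mul_pow]
      exact mul_le_mul_of_nonneg_left (by nlinarith [sq_nonneg (d 0 - d 1)]) (sq_nonneg k)
    linarith
  have := key 0
  have := key 1
  linarith

/-- squared `L²` norm of the gradient -/
def gr (u : SchwartzMap E2 ℂ) : ℝ := ∑ j, n2 (pd u j) ^ 2

theorem Au_bd {R β m S : ℝ} (hR : 0 < R) (u : SchwartzMap E2 ℂ) (hm : n2 u ≤ m) (hS : 0 ≤ S) (j : Fin 2)
    (h : ∀ x, |AA R u j x| ≤ 4 * n2 u * S) :
    n2 (fun x => ((β * AA R u j x : ℝ) : ℂ) * u x) ≤ 4 * |β| * m ^ 2 * S := by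
  have hn := n2_nonneg u
  have hm0 : 0 ≤ m := hn.trans hm
  have := bmul_n2 (f := fun x => ((β * AA R u j x : ℝ) : ℂ)) (C := |β| * (4 * m * S)) (by positivity)
    (fun x => by
      rw [Complex.norm_real, Real.norm_eq_abs, abs_mul]
      refine mul_le_mul_of_nonneg_left ((h x).trans ?_) (abs_nonneg β)
      gcongr) (sch_nc u) hm
  refine this.trans (le_of_eq ?_)
  ring

theorem gr_le {R β m : ℝ} (hR : 0 < R) (u : SchwartzMap E2 ℂ) (hm : n2 u ≤ m) :
    gr u ≤ (2 + 8 * (4 * |β| * m ^ 2) ^ 2) * energy β R u := by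
  rw [energy_eq hR]
  refine sum_cmp (by positivity) (fun _ => n2_nonneg _) (fun _ => n2_nonneg _) fun j => ?_
  have h1 := Au_bd (β := β) hR u hm (Finset.sum_nonneg fun k _ => n2_nonneg (Dd β R u k)) j (AA_D hR β u j)
  have hA : Nc (fun x => ((β * AA R u j x : ℝ) : ℂ) * u x) :=
    (((Bc.const β).mul (AA_bc hR u j)).ofReal).mulNc (sch_nc u)
  have h2 := n2_sub (Dd_nc (β := β) hR u j) hA
  have h3 : n2 (pd u j) = n2 (fun x => Dd β R u j x - ((β * AA R u j x : ℝ) : ℂ) * u x) := by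
    simp [n2, Dd]
  rw [h3]
  linarith

theorem energy_le {R β m : ℝ} (hR : 0 < R) (u : SchwartzMap E2 ℂ) (hm : n2 u ≤ m) :
    energy β R u ≤ (2 + 8 * (4 * |β| * m ^ 2) ^ 2) * gr u := by
  rw [energy_eq hR]
  refine sum_cmp (by positivity) (fun _ => n2_nonneg _) (fun _ => n2_nonneg _) fun j => ?_
  have h1 := Au_bd (β := β) hR u hm (Finset.sum_nonneg fun k _ => n2_nonneg (pd u k)) j (AA_P hR u j)
  have hA : Nc (fun x => ((β * AA R u j x : ℝ) : ℂ) * u x) :=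
    (((Bc.const β).mul (AA_bc hR u j)).ofReal).mulNc (sch_nc u)
  have h2 := n2_add ((sch_nc (pd u j)).cmul (-Complex.I)) hA
  have h3 : n2 (fun x => -Complex.I * pd u j x) = n2 (pd u j) := by simp [n2]
  rw [h3] at h2
  have h4 : n2 (Dd β R u j) = n2 (fun x => -Complex.I * pd u j x + ((β * AA R u j x : ℝ) : ℂ) * u x) := rfl
  rw [h4]
  linarith

theorem gr_closed {β R : ℝ} {u : ℝ → SchwartzMap E2 ℂ} {du : ℝ → E2 → ℂ}
    (h : Sol β R u du) (c : ℝ) : IsClosed {t | gr (u t) ≤ c} := by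
  have hn : ∀ t, Nc fun x => ∑ j, ‖pd (u t) j x‖ ^ 2 := fun t => Nc.sum fun j _ => (sch_nc (pd (u t) j)).sq
  have hg : ∀ t, gr (u t) = ∫ x, ∑ j, ‖pd (u t) j x‖ ^ 2 := fun t => by
    rw [integral_finsetSum _ fun j _ => (sch_nc (pd (u t) j)).sq.int]
    simp only [gr, n2_sq]
  have : {t | gr (u t) ≤ c} = ⋂ n : ℕ, {t | ∫ x, chi (n + 1) x * ∑ j, ‖pd (u t) j x‖ ^ 2 ≤ c} := by
    ext t
    simp only [mem_setOf_eq, mem_iInter, hg]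
    exact ⟨fun h n => (chi_int_le (hn t).int (fun x => by positivity) _).trans h,
      fun h => int_le_of_chi (hn t).int h⟩
  rw [this]
  refine isClosed_iInter fun n => isClosed_le ?_ continuous_const
  refine cut_cont (chi_cont _) (chi_supp (by positivity)) (G := fun t x => ∑ j, ‖pd (u t) j x‖ ^ 2) ?_
  have h1 : Continuous fun p : ℝ × E2 => ∑ j, ‖pd (u p.1) j p.2‖ ^ 2 :=
    continuous_finsetSum _ fun j _ => by
      have := (h.cpd j).norm.pow 2
      exact this
  exact h1

theorem energy_conserved {β R m : ℝ} (hR : 0 < R) {u : ℝ → SchwartzMap E2 ℂ} {du : ℝ → E2 → ℂ}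
    (h : Sol β R u du) (hm : ∀ t, n2 (u t) ≤ m) (t : ℝ) : energy β R (u t) = energy β R (u 0) := by
  refine baire_const (g := fun t => gr (u t)) (E := fun t => energy β R (u t))
    (c := 2 + 8 * (4 * |β| * m ^ 2) ^ 2) (fun n => gr_closed h n) (fun a b G hab hG => ?_)
    (fun t => gr_le hR _ (hm t)) (fun t => energy_le hR _ (hm t)) (by positivity) t
  refine energy_const hR m (√G) h hab fun t ht => ⟨hm t, fun j => ?_⟩
  refine Real.le_sqrt_of_sq_le (le_trans ?_ (hG t ht))
  exact Finset.single_le_sum (f := fun j => n2 (pd (u t) j) ^ 2) (fun _ _ => sq_nonneg _) (Finset.mem_univ j)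

/-! ### norms -/

theorem eLpNorm_n2 {F : Type*} [NormedAddCommGroup F] {f : E2 → F} (hf : Nc f) :
    eLpNorm f 2 volume = ENNReal.ofReal (n2 f) := by
  rw [eLpNorm_eq_lintegral_rpow_enorm_toReal (by simp) (by simp)]
  have h1 : ∫⁻ x, ‖f x‖ₑ ^ (2 : ℝ≥0∞).toReal = ENNReal.ofReal (∫ x, ‖f x‖ ^ 2) := by
    rw [ofReal_integral_eq_lintegral_ofReal hf.sq.int (ae_of_all _ fun x => by positivity)]
    refine lintegral_congr fun x => ?_
    rw [ENNReal.ofReal_pow (norm_nonneg _), ofReal_norm_eq_enorm]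
    simp
  rw [h1, n2, Real.sqrt_eq_rpow, ENNReal.ofReal_rpow_of_nonneg (integral_nonneg fun x => by positivity) (by positivity)]
  simp

theorem fd_nc (u : SchwartzMap E2 ℂ) : Nc (fun x => fderiv ℝ u x) :=
  ⟨(SchwartzMap.fderivCLM ℝ E2 ℂ u).continuous, (SchwartzMap.fderivCLM ℝ E2 ℂ u).integrable,
    ⟨_, fun x => SchwartzMap.norm_le_seminorm ℝ (SchwartzMap.fderivCLM ℝ E2 ℂ u) x⟩⟩

theorem norm_e2 (j : Fin 2) : ‖e2 j‖ = 1 := by simp [e2]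

theorem pd_le_fd (u : SchwartzMap E2 ℂ) (j : Fin 2) : n2 (pd u j) ≤ n2 (fun x => fderiv ℝ u x) := by
  have := n2_le zero_le_one (fd_nc u) (f := pd u j) fun x => by
    have := (fderiv ℝ u x).le_opNorm (e2 j)
    rw [norm_e2, mul_one] at this
    rw [one_mul]; exact this
  simpa using this

theorem fd_le (u : SchwartzMap E2 ℂ) : n2 (fun x => fderiv ℝ u x) ^ 2 ≤ 2 * gr u := by
  have h1 : n2 (fun x => fderiv ℝ u x) ≤ n2 (fun x => ‖pd u 0 x‖ + ‖pd u 1 x‖) := by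
    have := n2_le zero_le_one ((sch_nc (pd u 0)).norm.add (sch_nc (pd u 1)).norm)
      (f := fun x => fderiv ℝ u x) fun x => by
        rw [one_mul, Real.norm_of_nonneg (by positivity)]
        refine ContinuousLinearMap.opNorm_le_bound _ (by positivity) fun v => ?_
        rw [sch_fderiv_eq, Fin.sum_univ_two]
        refine (norm_add_le _ _).trans ?_
        rw [norm_mul, norm_mul, Complex.norm_real, Complex.norm_real]
        have h0 : ∀ j, ‖v j‖ ≤ ‖v‖ := fun j => PiLp.norm_apply_le v j
        nlinarith [h0 0, h0 1, norm_nonneg (pd u 0 x), norm_nonneg (pd u 1 x)]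
    simpa using this
  have h2 := n2_add (sch_nc (pd u 0)).norm (sch_nc (pd u 1)).norm
  rw [n2_norm, n2_norm] at h2
  have h3 := pow_le_pow_left₀ (n2_nonneg _) (h1.trans h2) 2
  simp only [gr, Fin.sum_univ_two]
  nlinarith [sq_nonneg (n2 (pd u 0) - n2 (pd u 1))]

theorem H1_eq (u : SchwartzMap E2 ℂ) :
    H1 u = ENNReal.ofReal (√(n2 u ^ 2 + n2 (fun x => fderiv ℝ u x) ^ 2)) := by
  rw [H1, eLpNorm_n2 (sch_nc u), eLpNorm_n2 (fd_nc u), ← ENNReal.ofReal_pow (n2_nonneg _),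
    ← ENNReal.ofReal_pow (n2_nonneg _), ← ENNReal.ofReal_add (sq_nonneg _) (sq_nonneg _),
    ENNReal.ofReal_rpow_of_nonneg (by positivity) (by positivity), ← Real.sqrt_eq_rpow]

theorem statement14' (β M : ℝ) :
    ∃ C : ℝ, ∀ R : ℝ, 0 < R →
      ∀ (u : ℝ → SchwartzMap E2 ℂ) (du : ℝ → E2 → ℂ),
        (ContDiff ℝ (⊤ : ℕ∞) fun p : ℝ × E2 => u p.1 p.2) →
        (∀ t x, HasDerivAt (fun s => u s x) (du t x) t) →
        (∀ t x, Complex.I * du t x = cssRHS β R (⇑(u t)) x) →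
        (∀ t : ℝ, eLpNorm (⇑(u t)) 2 volume = eLpNorm (⇑(u 0)) 2 volume) →
        H1 (⇑(u 0)) ≤ ENNReal.ofReal M →
        ∀ t : ℝ, H1 (⇑(u t)) ≤ ENNReal.ofReal C := by
  set m := max M 0 with hm
  have hm0 : 0 ≤ m := le_max_right _ _
  set c := 2 + 8 * (4 * |β| * m ^ 2) ^ 2 with hc
  have hc0 : 0 ≤ c := by positivity
  refine ⟨√(m ^ 2 + 2 * (c * (c * (2 * m ^ 2)))), fun R hR u du h1 h2 h3 h4 h5 t => ?_⟩
  have hS := Sol.mk' hR h1 h2 h3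
  have h6 : √(n2 (u 0) ^ 2 + n2 (fun x => fderiv ℝ (u 0) x) ^ 2) ≤ m := by
    rw [H1_eq] at h5
    refine (ENNReal.ofReal_le_ofReal_iff hm0).1 (h5.trans (ENNReal.ofReal_le_ofReal (le_max_left _ _)))
  have h7 := (Real.sqrt_le_iff.1 h6).2
  have h8 : n2 (u 0) ≤ m := abs_le_of_sq_le_sq' (by nlinarith [sq_nonneg (n2 (fun x => fderiv ℝ (u 0) x))]) hm0 |>.2
  have h9 : ∀ t, n2 (u t) ≤ m := fun t => by
    have := h4 t
    rw [eLpNorm_n2 (sch_nc _), eLpNorm_n2 (sch_nc _)] at this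
    rw [(ENNReal.ofReal_eq_ofReal_iff (n2_nonneg _) (n2_nonneg _)).1 this]
    exact h8
  have hg0 : gr (u 0) ≤ 2 * m ^ 2 := by
    have e : ∀ j, n2 (pd (u 0) j) ^ 2 ≤ n2 (fun x => fderiv ℝ (u 0) x) ^ 2 := fun j =>
      pow_le_pow_left₀ (n2_nonneg _) (pd_le_fd _ j) 2
    simp only [gr, Fin.sum_univ_two]
    nlinarith [e 0, e 1, sq_nonneg (n2 (u 0))]
  have hE0 : energy β R (u 0) ≤ c * (2 * m ^ 2) :=
    (energy_le hR _ h8).trans (mul_le_mul_of_nonneg_left hg0 hc0)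
  have hgt : gr (u t) ≤ c * (c * (2 * m ^ 2)) := by
    refine (gr_le (β := β) hR _ (h9 t)).trans ?_
    rw [energy_conserved hR hS h9 t]
    exact mul_le_mul_of_nonneg_left hE0 hc0
  rw [H1_eq]
  refine ENNReal.ofReal_le_ofReal (Real.sqrt_le_sqrt ?_)
  have := pow_le_pow_left₀ (n2_nonneg _) (h9 t) 2
  have := fd_le (u t)
  linarith


end Proofs

/-- Theorem 3.1, estimate (3.4) (uniform `H¹` bound): for a smooth Schwartz-class,
mass-conserving solution of the regularized CSS equation there is a constant `C`
depending only on `β` and `‖u(0)‖_{H¹}` (independent of `R` and `t`) with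
`‖u(t)‖_{H¹} ≤ C` for all `t`. -/
theorem statement14 (β M : ℝ) :
    ∃ C : ℝ, ∀ R : ℝ, 0 < R →
      ∀ (u : ℝ → SchwartzMap E2 ℂ) (du : ℝ → E2 → ℂ),
        (ContDiff ℝ (⊤ : ℕ∞) fun p : ℝ × E2 => u p.1 p.2) →
        (∀ t x, HasDerivAt (fun s => u s x) (du t x) t) →
        (∀ t x, Complex.I * du t x = cssRHS β R (⇑(u t)) x) →
        (∀ t : ℝ, eLpNorm (⇑(u t)) 2 volume = eLpNorm (⇑(u 0)) 2 volume) →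
        H1 (⇑(u 0)) ≤ ENNReal.ofReal M →
        ∀ t : ℝ, H1 (⇑(u t)) ≤ ENNReal.ofReal C := by
  exact statement14' β M
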